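/- arXiv:quant-ph/0404046 — 2 statements merged into one kernel-verified Lean document; each statement's English description precedes it below -/
import Mathlib

section
/- Let y ∈ V^n be a probability vector with positive components, let λ ∈ (0,1), and let k be a positive integer. The following three statements are equivalent: (1) T_k^λ(y) = S^λ(y); (2) M_k^λ(y) = S^λ(y); (3) y_{d+1}^k ≤ y_n^{k−1} y_d for every d with 0 < d < n−1. -/
noncomputable section

/-- `eSum x l` : the sum of the `l` largest components of `x`. -/
def eSum {n : ℕ} (x : Fin n → ℝ) (l : ℕ) : ℝ :=
  sSup {r | ∃ s : Finset (Fin n), s.card = l ∧ r = ∑ i ∈ s, x i}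

/-- `ESum x l` : the sum of the `l` smallest components of `x`. -/
def ESum {n : ℕ} (x : Fin n → ℝ) (l : ℕ) : ℝ :=
  sInf {r | ∃ s : Finset (Fin n), s.card = l ∧ r = ∑ i ∈ s, x i}

/-- Majorization `x ≺ y` (for vectors with equal total sum):
`e_l(x) ≤ e_l(y)` for all `1 ≤ l ≤ n`. -/
def Maj {n : ℕ} (x y : Fin n → ℝ) : Prop :=
  (∑ i, x i) = (∑ i, y i) ∧ ∀ l : ℕ, 1 ≤ l → l ≤ n → eSum x l ≤ eSum y l

/-- Strict majorization `x ◁ y`: equal total sums and `e_l(x) < e_l(y)` for all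
`1 ≤ l ≤ n - 1`. -/
def SMaj {n : ℕ} (x y : Fin n → ℝ) : Prop :=
  (∑ i, x i) = (∑ i, y i) ∧ ∀ l : ℕ, 1 ≤ l → l + 1 ≤ n → eSum x l < eSum y l

/-- Super-majorization `x ≺ʷ y` : `E_l(x) ≥ E_l(y)` for all `1 ≤ l ≤ n`. -/
def SupMaj {n : ℕ} (x y : Fin n → ℝ) : Prop :=
  ∀ l : ℕ, 1 ≤ l → l ≤ n → ESum y l ≤ ESum x l

/-- Strict super-majorization `x ◁ʷ y` : `E_l(x) > E_l(y)` for all `1 ≤ l ≤ n`. -/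
def SSupMaj {n : ℕ} (x y : Fin n → ℝ) : Prop :=
  ∀ l : ℕ, 1 ≤ l → l ≤ n → ESum y l < ESum x l

/-- Tensor product of two vectors: the vector of all pairwise products. -/
def tensor {m k : ℕ} (x : Fin m → ℝ) (c : Fin k → ℝ) : Fin (m * k) → ℝ :=
  fun i => x (finProdFinEquiv.symm i).1 * c (finProdFinEquiv.symm i).2

/-- `k`-fold tensor power of a vector. -/
def tpow {n : ℕ} (x : Fin n → ℝ) (k : ℕ) : Fin (n ^ k) → ℝ :=
  fun i => ∏ j : Fin k, x (finFunctionFinEquiv.symm i j)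

/-- `V^n` : probability vectors with components in non-increasing order. -/
def Vn (n : ℕ) : Set (Fin n → ℝ) :=
  {x | (∀ i, 0 ≤ x i) ∧ (∑ i, x i) = 1 ∧ Antitone x}

/-- `S(y)` : members of `V^n` majorized by `y`. -/
def Sset {n : ℕ} (y : Fin n → ℝ) : Set (Fin n → ℝ) :=
  {x ∈ Vn n | Maj x y}

/-- `T(y,c)` : members of `V^n` with `x ⊗ c ≺ y ⊗ c`. -/
def Tcat {n k : ℕ} (y : Fin n → ℝ) (c : Fin k → ℝ) : Set (Fin n → ℝ) :=
  {x ∈ Vn n | Maj (tensor x c) (tensor y c)}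

/-- Local uniformity `l_u(c)` : the minimum of the consecutive ratios `c_{i+1}/c_i`. -/
def lu {k : ℕ} (c : Fin k → ℝ) : ℝ :=
  sInf {r | ∃ i : ℕ, ∃ h : i + 1 < k, r = c ⟨i + 1, h⟩ / c ⟨i, Nat.lt_of_succ_lt h⟩}

/-- Global uniformity `g_u(c) = c_k / c_1` (smallest over largest component of a
non-increasingly ordered vector). -/
def gu {k : ℕ} (c : Fin k → ℝ) : ℝ :=
  if h : 0 < k then c ⟨k - 1, Nat.sub_lt h Nat.one_pos⟩ / c ⟨0, h⟩ else 1

/-- Largest component. -/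
def maxc {n : ℕ} (x : Fin n → ℝ) : ℝ := sSup (Set.range x)

/-- Smallest component. -/
def minc {n : ℕ} (x : Fin n → ℝ) : ℝ := sInf (Set.range x)

/-- `c'` is a (contiguous) segment of `c`. -/
def IsSegment {j k : ℕ} (c' : Fin j → ℝ) (c : Fin k → ℝ) : Prop :=
  ∃ (i : ℕ) (_h : i + j ≤ k), ∀ t : Fin j, c' t = c ⟨i + t, by have := t.isLt; omega⟩

/-- The first `d` components of a vector. -/
def take {n : ℕ} (x : Fin n → ℝ) (d : ℕ) (h : d ≤ n) : Fin d → ℝ :=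
  fun i => x ⟨i, Nat.lt_of_lt_of_le i.isLt h⟩

/-- The components of a vector after the first `d` ones. -/
def drop {n : ℕ} (x : Fin n → ℝ) (d : ℕ) : Fin (n - d) → ℝ :=
  fun i => x ⟨d + i, by have := i.isLt; omega⟩

/-- The segment `(c_i, …, c_j)` of `c` (`0`-based indices). -/
def seg {k : ℕ} (c : Fin k → ℝ) (i j : ℕ) (hij : i ≤ j) (hj : j < k) :
    Fin (j - i + 1) → ℝ :=
  fun t => c ⟨i + t, by have := t.isLt; omega⟩

/-- `(c_i, …, c_j)` is a block of the decomposition `[c]_α` of the (positive,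
non-increasingly ordered) vector `c` according to `α`: ratios within the block
exceed `α`, and the ratios at the two boundaries of the block are `≤ α`
(or the block touches an end of `c`). -/
def IsBlock {k : ℕ} (α : ℝ) (c : Fin k → ℝ) (i j : ℕ) : Prop :=
  ∃ (hij : i ≤ j) (hj : j < k),
    (i = 0 ∨ c ⟨i, by omega⟩ / c ⟨i - 1, by omega⟩ ≤ α) ∧
    (j = k - 1 ∨ ∃ hj1 : j + 1 < k, c ⟨j + 1, hj1⟩ / c ⟨j, hj⟩ ≤ α) ∧
    (∀ (t : ℕ) (ht1 : i ≤ t) (ht2 : t < j), α < c ⟨t + 1, by omega⟩ / c ⟨t, by omega⟩)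

/-- `T_k(y)` : states transformable to `y` with a `k`-dimensional catalyst. -/
def Tk {n : ℕ} (k : ℕ) (y : Fin n → ℝ) : Set (Fin n → ℝ) :=
  {x ∈ Vn n | ∃ c : Fin k → ℝ, (∀ i, 0 < c i) ∧ (∑ i, c i) = 1 ∧ Antitone c ∧
    Maj (tensor x c) (tensor y c)}

/-- `M_k(y)` : states `x` with `x^{⊗k} ≺ y^{⊗k}`. -/
def Mk {n : ℕ} (k : ℕ) (y : Fin n → ℝ) : Set (Fin n → ℝ) :=
  {x ∈ Vn n | Maj (tpow x k) (tpow y k)}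

/-- `T(y)` : states transformable to `y` with some catalyst. -/
def Tinf {n : ℕ} (y : Fin n → ℝ) : Set (Fin n → ℝ) :=
  {x ∈ Vn n | ∃ (k : ℕ) (c : Fin k → ℝ), 0 < k ∧ (∀ i, 0 < c i) ∧ (∑ i, c i) = 1 ∧
    Antitone c ∧ Maj (tensor x c) (tensor y c)}

/-- `M(y)` : states `x` with `x^{⊗k} ≺ y^{⊗k}` for some `k ≥ 1`. -/
def Minf {n : ℕ} (y : Fin n → ℝ) : Set (Fin n → ℝ) :=
  {x ∈ Vn n | ∃ k : ℕ, 1 ≤ k ∧ Maj (tpow x k) (tpow y k)}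

/-- `S^λ(y)` : states `x` with `x ≺ʷ λ y`. -/
def Slam {n : ℕ} (lam : ℝ) (y : Fin n → ℝ) : Set (Fin n → ℝ) :=
  {x ∈ Vn n | SupMaj x (fun i => lam * y i)}

/-- `T^λ(y,c)` : states `x` with `x ⊗ c ≺ʷ λ (y ⊗ c)`. -/
def Tlamc {n k : ℕ} (lam : ℝ) (y : Fin n → ℝ) (c : Fin k → ℝ) : Set (Fin n → ℝ) :=
  {x ∈ Vn n | SupMaj (tensor x c) (fun i => lam * tensor y c i)}

/-- `T_k^λ(y)`. -/
def Tklam {n : ℕ} (k : ℕ) (lam : ℝ) (y : Fin n → ℝ) : Set (Fin n → ℝ) :=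
  {x ∈ Vn n | ∃ c : Fin k → ℝ, (∀ i, 0 < c i) ∧ (∑ i, c i) = 1 ∧ Antitone c ∧
    SupMaj (tensor x c) (fun i => lam * tensor y c i)}

/-- `M_k^λ(y)`. -/
def Mklam {n : ℕ} (k : ℕ) (lam : ℝ) (y : Fin n → ℝ) : Set (Fin n → ℝ) :=
  {x ∈ Vn n | SupMaj (tpow x k) (fun i => lam ^ k * tpow y k i)}

/-- `T^λ(y)`. -/
def Tlaminf {n : ℕ} (lam : ℝ) (y : Fin n → ℝ) : Set (Fin n → ℝ) :=
  {x ∈ Vn n | ∃ (k : ℕ) (c : Fin k → ℝ), 0 < k ∧ (∀ i, 0 < c i) ∧ (∑ i, c i) = 1 ∧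
    Antitone c ∧ SupMaj (tensor x c) (fun i => lam * tensor y c i)}

/-- `M^λ(y)`. -/
def Mlaminf {n : ℕ} (lam : ℝ) (y : Fin n → ℝ) : Set (Fin n → ℝ) :=
  {x ∈ Vn n | ∃ k : ℕ, 1 ≤ k ∧ SupMaj (tpow x k) (fun i => lam ^ k * tpow y k i)}

/-- `K_d(y)` : concatenations `x = x' ⊕ x''` with `x' ◁ y'` and `x'' ◁ y''`,
where `y'` is the first-`d` part of `y` and `y''` the rest. -/
def Kd {n : ℕ} (y : Fin n → ℝ) (d : ℕ) (h : d ≤ n) : Set (Fin n → ℝ) :=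
  {x ∈ Vn n | SMaj (take x d h) (take y d h) ∧ SMaj (drop x d) (drop y d)}

/-- `y(d)` : first `d` components equal to `e_d(y)/d`, the last `n-d` equal to
`(1 - e_d(y))/(n-d)`. -/
def yvec {n : ℕ} (y : Fin n → ℝ) (d : ℕ) : Fin n → ℝ :=
  fun i => if (i : ℕ) < d then eSum y d / d else (1 - eSum y d) / (n - d)

/-- `K_d^λ(y)` : states `x ∈ S^λ(y)` with `E_l(x) = λ E_l(y)` iff `l = n - d`. -/
def Kdlam {n : ℕ} (lam : ℝ) (y : Fin n → ℝ) (d : ℕ) : Set (Fin n → ℝ) :=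
  {x ∈ Vn n | SupMaj x (fun i => lam * y i) ∧
    ∀ l : ℕ, 1 ≤ l → l ≤ n → (ESum x l = lam * ESum y l ↔ l = n - d)}

/-- The hinge sum `∑ i, (t - x i)⁺`. -/
def hinge {ι : Type*} [Fintype ι] (x : ι → ℝ) (t : ℝ) : ℝ := ∑ i, max (t - x i) 0

theorem card_mul_sub_sum_le_hinge {ι : Type*} [Fintype ι] (x : ι → ℝ) (t : ℝ) (s : Finset ι) :
    s.card * t - ∑ i ∈ s, x i ≤ hinge x t := by
  calc s.card * t - ∑ i ∈ s, x i = ∑ i ∈ s, (t - x i) := by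
        rw [Finset.sum_sub_distrib, Finset.sum_const, nsmul_eq_mul]
    _ ≤ ∑ i ∈ s, max (t - x i) 0 := Finset.sum_le_sum fun i _ => le_max_left _ _
    _ ≤ hinge x t :=
        Finset.sum_le_sum_of_subset_of_nonneg (Finset.subset_univ s) fun i _ _ => le_max_right _ _

theorem hinge_nonneg {ι : Type*} [Fintype ι] (x : ι → ℝ) (t : ℝ) : 0 ≤ hinge x t :=
  Finset.sum_nonneg fun _ _ => le_max_right _ _

theorem hinge_eq_of_threshold {ι : Type*} [Fintype ι] (x : ι → ℝ) (t : ℝ) (s : Finset ι)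
    (hs : ∀ i ∈ s, x i ≤ t) (hs' : ∀ i ∉ s, t ≤ x i) :
    hinge x t = s.card * t - ∑ i ∈ s, x i := by
  have h : ∑ i ∈ s, max (t - x i) 0 = hinge x t :=
    Finset.sum_subset (Finset.subset_univ s) fun i _ hi =>
      max_eq_right (by linarith [hs' i hi])
  rw [← h, ← nsmul_eq_mul, ← Finset.sum_const, ← Finset.sum_sub_distrib]
  exact Finset.sum_congr rfl fun i hi => max_eq_left (by linarith [hs i hi])

theorem exists_threshold {ι : Type*} [Fintype ι] [DecidableEq ι] (x : ι → ℝ) (l : ℕ)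
    (hl : 1 ≤ l) (hl' : l ≤ Fintype.card ι) :
    ∃ (s : Finset ι) (t : ℝ), s.card = l ∧ (∀ i ∈ s, x i ≤ t) ∧ ∀ i ∉ s, t ≤ x i := by
  obtain ⟨s, hs, hmin⟩ := Finset.exists_min_image
    (Finset.powersetCard l (Finset.univ : Finset ι)) (fun s => ∑ i ∈ s, x i)
    (Finset.powersetCard_nonempty.2 (by simpa using hl'))
  have hcard : s.card = l := (Finset.mem_powersetCard.1 hs).2
  obtain ⟨j, hj, hmax⟩ := Finset.exists_max_image s x (Finset.card_pos.1 (by omega))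
  refine ⟨s, x j, hcard, hmax, fun i hi => ?_⟩
  have hi' : i ∉ s.erase j := fun h => hi (Finset.mem_of_mem_erase h)
  have := hmin (insert i (s.erase j)) (Finset.mem_powersetCard.2 ⟨Finset.subset_univ _, by
    rw [Finset.card_insert_of_notMem hi', Finset.card_erase_of_mem hj]; omega⟩)
  simp only [Finset.sum_insert hi'] at this
  have h2 := Finset.add_sum_erase s x hj
  linarith

theorem ESum_le {n : ℕ} (x : Fin n → ℝ) (s : Finset (Fin n)) : ESum x s.card ≤ ∑ i ∈ s, x i := by
  refine csInf_le (Set.Finite.bddBelow ?_) ⟨s, rfl, rfl⟩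
  refine (Set.finite_range fun s : Finset (Fin n) => ∑ i ∈ s, x i).subset ?_
  rintro r ⟨s, -, rfl⟩
  exact ⟨s, rfl⟩

theorem le_ESum {n : ℕ} (x : Fin n → ℝ) (l : ℕ) (hl : l ≤ n) (r : ℝ)
    (h : ∀ s : Finset (Fin n), s.card = l → r ≤ ∑ i ∈ s, x i) : r ≤ ESum x l := by
  obtain ⟨s, -, hs⟩ := Finset.exists_subset_card_eq
    (s := (Finset.univ : Finset (Fin n))) (n := l) (by simpa using hl)
  refine le_csInf ⟨_, s, hs, rfl⟩ ?_
  rintro _ ⟨s, hs, rfl⟩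
  exact h s hs

theorem ESum_eq_of_threshold {n : ℕ} (x : Fin n → ℝ) (t : ℝ) (s : Finset (Fin n))
    (hs : ∀ i ∈ s, x i ≤ t) (hs' : ∀ i ∉ s, t ≤ x i) : ESum x s.card = ∑ i ∈ s, x i := by
  refine le_antisymm (ESum_le x s) (le_ESum x _ (by simpa using s.card_le_univ) _ fun r hr => ?_)
  have h1 := hinge_eq_of_threshold x t s hs hs'
  have h2 := card_mul_sub_sum_le_hinge x t r
  rw [hr] at h2
  linarith

theorem supMaj_iff_hinge {n : ℕ} (x z : Fin n → ℝ) :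
    SupMaj x z ↔ ∀ t, hinge x t ≤ hinge z t := by
  constructor
  · intro h t
    have h1 := hinge_eq_of_threshold x t (Finset.univ.filter fun i => x i < t)
      (fun i hi => (Finset.mem_filter.1 hi).2.le)
      (fun i hi => by simpa using hi)
    set s := Finset.univ.filter fun i => x i < t
    rcases s.eq_empty_or_nonempty with hs | hs
    · rw [h1, hs]
      simpa using hinge_nonneg z t
    · have hn : s.card ≤ n := by simpa using s.card_le_univ
      obtain ⟨r, t', hr, h2, h3⟩ := exists_threshold z s.card (Finset.card_pos.2 hs)
        (by simpa using hn)
      have h4 := ESum_eq_of_threshold z t' r h2 h3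
      have h5 := h s.card (Finset.card_pos.2 hs) hn
      have h6 := ESum_le x s
      have h7 := card_mul_sub_sum_le_hinge z t r
      rw [hr] at h4 h7
      linarith
  · intro h l hl hn
    obtain ⟨r, t, rfl, h2, h3⟩ := exists_threshold z l hl (by simpa using hn)
    refine le_ESum x _ hn _ fun s hs => ?_
    have h4 := ESum_eq_of_threshold z t r h2 h3
    have h5 := hinge_eq_of_threshold z t r h2 h3
    have h6 := card_mul_sub_sum_le_hinge x t s
    rw [hs] at h6
    linarith [h t]

theorem ESum_lt_sum {n : ℕ} (x z : Fin n → ℝ) (m : ℝ) (hm : ∀ i, m < x i)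
    (h : ∀ t, m < t → hinge x t < hinge z t) (s : Finset (Fin n)) (hs : s.Nonempty) :
    ESum z s.card < ∑ i ∈ s, x i := by
  obtain ⟨r, t, hr, h2, h3⟩ := exists_threshold z s.card (Finset.card_pos.2 hs)
    s.card_le_univ
  have h4 := ESum_eq_of_threshold z t r h2 h3
  rw [hr] at h4
  rw [h4]
  rcases lt_or_ge m t with ht | ht
  · have h5 := hinge_eq_of_threshold z t r h2 h3
    have h6 := card_mul_sub_sum_le_hinge x t s
    rw [hr] at h5
    linarith [h t ht]
  · calc ∑ i ∈ r, z i ≤ ∑ i ∈ r, m := Finset.sum_le_sum fun i hi => (h2 i hi).trans ht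
      _ = ∑ i ∈ s, m := by simp [hr]
      _ < ∑ i ∈ s, x i := Finset.sum_lt_sum_of_nonempty hs fun i _ => hm i

theorem hinge_mul {ι : Type*} [Fintype ι] (x : ι → ℝ) {w : ℝ} (hw : 0 < w) (t : ℝ) :
    hinge (fun i => x i * w) t = w * hinge x (t / w) := by
  unfold hinge
  rw [Finset.mul_sum]
  refine Finset.sum_congr rfl fun i _ => ?_
  rw [mul_max_of_nonneg _ _ hw.le, mul_zero, mul_sub, mul_div_cancel₀ _ hw.ne', mul_comm w]

theorem hinge_mul_le {ι : Type*} [Fintype ι] {x z : ι → ℝ} (h : ∀ t, hinge x t ≤ hinge z t)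
    {w : ℝ} (hw : 0 ≤ w) (t : ℝ) :
    hinge (fun i => x i * w) t ≤ hinge (fun i => z i * w) t := by
  rcases hw.eq_or_lt with rfl | hw
  · simp
  · rw [hinge_mul x hw, hinge_mul z hw]
    exact mul_le_mul_of_nonneg_left (h _) hw.le

theorem hinge_tensor {m k : ℕ} (x : Fin m → ℝ) (c : Fin k → ℝ) (t : ℝ) :
    hinge (tensor x c) t = ∑ j, hinge (fun i => x i * c j) t := by
  unfold hinge tensor
  rw [Finset.sum_comm, ← Fintype.sum_prod_type']
  exact Fintype.sum_equiv finProdFinEquiv.symm _ _ fun _ => rfl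

/-- The hinge sum of `w * x^{⊗ k}`. -/
def powHinge {n : ℕ} (x : Fin n → ℝ) (k : ℕ) (w t : ℝ) : ℝ :=
  hinge (fun f : Fin k → Fin n => w * ∏ j, x (f j)) t

theorem hinge_tpow {n : ℕ} (x : Fin n → ℝ) (k : ℕ) (t : ℝ) :
    hinge (tpow x k) t = powHinge x k 1 t := by
  unfold powHinge hinge tpow
  simp only [one_mul]
  exact Fintype.sum_equiv finFunctionFinEquiv.symm _ _ fun _ => rfl

theorem powHinge_succ {n : ℕ} (x : Fin n → ℝ) (k : ℕ) (w t : ℝ) :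
    powHinge x (k + 1) w t = ∑ i, powHinge x k (w * x i) t := by
  unfold powHinge hinge
  rw [← Fintype.sum_prod_type']
  refine (Fintype.sum_equiv (Fin.consEquiv fun _ => Fin n) _ _ fun p => ?_).symm
  simp [Fin.prod_univ_succ, mul_assoc]

theorem powHinge_succ' {n : ℕ} (x : Fin n → ℝ) (k : ℕ) (w t : ℝ) :
    powHinge x (k + 1) w t =
      ∑ f : Fin k → Fin n, hinge (fun i => x i * (w * ∏ j, x (f j))) t := by
  rw [powHinge_succ]
  unfold powHinge hinge
  rw [Finset.sum_comm]
  refine Finset.sum_congr rfl fun f _ => Finset.sum_congr rfl fun i _ => ?_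
  ring_nf

theorem sum_powHinge_eq {n : ℕ} (x z : Fin n → ℝ) (k : ℕ) (w t : ℝ) :
    ∑ i, powHinge z k (w * x i) t =
      ∑ f : Fin k → Fin n, hinge (fun i => x i * (w * ∏ j, z (f j))) t := by
  unfold powHinge hinge
  rw [Finset.sum_comm]
  refine Finset.sum_congr rfl fun f _ => Finset.sum_congr rfl fun i _ => ?_
  ring_nf

theorem powHinge_le {n : ℕ} {x z : Fin n → ℝ} (hx : ∀ i, 0 ≤ x i) (hz : ∀ i, 0 ≤ z i)
    (h : ∀ t, hinge x t ≤ hinge z t) (k : ℕ) (w : ℝ) (hw : 0 ≤ w) (t : ℝ) :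
    powHinge x k w t ≤ powHinge z k w t := by
  induction k generalizing w with
  | zero => simp [powHinge, hinge]
  | succ k ih =>
    rw [powHinge_succ, powHinge_succ']
    refine (Finset.sum_le_sum fun i _ => ih (w * x i) (mul_nonneg hw (hx i))).trans ?_
    rw [sum_powHinge_eq]
    exact Finset.sum_le_sum fun f _ => hinge_mul_le h
      (mul_nonneg hw (Finset.prod_nonneg fun j _ => hz _)) t

theorem powHinge_lt_of_hinge_lt {n : ℕ} {x z : Fin n → ℝ} (hx : ∀ i, 0 ≤ x i) (hz : ∀ i, 0 ≤ z i)
    (h : ∀ t, hinge x t ≤ hinge z t) (k : ℕ) (w : ℝ) (hw : 0 ≤ w) (t : ℝ) (f : Fin k → Fin n)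
    (hf : hinge (fun i => x i * (w * ∏ j, z (f j))) t <
      hinge (fun i => z i * (w * ∏ j, z (f j))) t) :
    powHinge x (k + 1) w t < powHinge z (k + 1) w t := by
  rw [powHinge_succ, powHinge_succ']
  refine (Finset.sum_le_sum fun i _ =>
    powHinge_le hx hz h k (w * x i) (mul_nonneg hw (hx i)) t).trans_lt ?_
  rw [sum_powHinge_eq]
  exact Finset.sum_lt_sum (fun f _ => hinge_mul_le h
    (mul_nonneg hw (Finset.prod_nonneg fun j _ => hz _)) t) ⟨f, Finset.mem_univ f, hf⟩

theorem powHinge_succ_lt {n : ℕ} {x z : Fin n → ℝ} (hx : ∀ i, 0 ≤ x i) (hz : ∀ i, 0 ≤ z i)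
    (h : ∀ t, hinge x t ≤ hinge z t) (k : ℕ) (w : ℝ) (hw : 0 ≤ w) (t : ℝ) (i : Fin n)
    (hi : powHinge x k (w * x i) t < powHinge z k (w * x i) t) :
    powHinge x (k + 1) w t < powHinge z (k + 1) w t := by
  rw [powHinge_succ, powHinge_succ']
  refine (Finset.sum_lt_sum (fun i _ =>
    powHinge_le hx hz h k (w * x i) (mul_nonneg hw (hx i)) t)
    ⟨i, Finset.mem_univ i, hi⟩).trans_le ?_
  rw [sum_powHinge_eq]
  exact Finset.sum_le_sum fun f _ => hinge_mul_le h
    (mul_nonneg hw (Finset.prod_nonneg fun j _ => hz _)) t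

theorem SupMaj.tensor {n k : ℕ} {x z : Fin n → ℝ} (h : SupMaj x z) {c : Fin k → ℝ}
    (hc : ∀ j, 0 ≤ c j) : SupMaj (tensor x c) (tensor z c) := by
  rw [supMaj_iff_hinge] at h ⊢
  intro t
  rw [hinge_tensor, hinge_tensor]
  exact Finset.sum_le_sum fun j _ => hinge_mul_le h (hc j) t

theorem SupMaj.tpow {n : ℕ} {x z : Fin n → ℝ} (h : SupMaj x z) (hx : ∀ i, 0 ≤ x i)
    (hz : ∀ i, 0 ≤ z i) (k : ℕ) : SupMaj (tpow x k) (tpow z k) := by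
  rw [supMaj_iff_hinge] at h ⊢
  intro t
  rw [hinge_tpow, hinge_tpow]
  exact powHinge_le hx hz h k 1 zero_le_one t

/-- The indices from `d` on. -/
def tailSet (n d : ℕ) : Finset (Fin n) := Finset.univ.filter fun i => d ≤ (i : ℕ)

theorem mem_tailSet {n d : ℕ} {i : Fin n} : i ∈ tailSet n d ↔ d ≤ (i : ℕ) := by
  simp [tailSet]

theorem card_tailSet {n d : ℕ} (hd : d ≤ n) : (tailSet n d).card = n - d := by
  have h := Finset.card_filter_add_card_filter_not (s := (Finset.univ : Finset (Fin n)))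
    (fun i => (i : ℕ) < d)
  have h2 : (Finset.univ.filter fun i : Fin n => (i : ℕ) < d).card = d := by
    rw [Fin.card_filter_val_lt]; omega
  simp only [not_lt, Finset.card_univ, Fintype.card_fin, h2] at h
  unfold tailSet
  omega

theorem ESum_eq_sum_tailSet {n d : ℕ} {x : Fin n → ℝ} (hx : Antitone x) (hd : d < n) :
    ESum x (n - d) = ∑ i ∈ tailSet n d, x i := by
  rw [← card_tailSet hd.le]
  refine ESum_eq_of_threshold x (x ⟨d, hd⟩) _ (fun i hi => hx ?_) (fun i hi => hx ?_)
  · exact mem_tailSet.1 hi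
  · have := mt mem_tailSet.2 hi
    exact Fin.le_def.2 (by simp only; omega)

theorem supMaj_of_sum_tailSet_le {n : ℕ} {x z : Fin n → ℝ} (hx : Antitone x) (hz : Antitone z)
    (hsum : ∑ i, z i ≤ ∑ i, x i)
    (h : ∀ d, 0 < d → d < n → ∑ i ∈ tailSet n d, z i ≤ ∑ i ∈ tailSet n d, x i) :
    SupMaj x z := by
  intro l hl hln
  obtain ⟨d, rfl⟩ : ∃ d, l = n - d := ⟨n - l, by omega⟩
  rw [ESum_eq_sum_tailSet hx (by omega), ESum_eq_sum_tailSet hz (by omega)]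
  rcases d.eq_zero_or_pos with rfl | hd
  · simpa [tailSet] using hsum
  · exact h d hd (by omega)

/-- The ratio condition `z_{d+1}^k ≤ z_n^{k-1} z_d` for all `0 < d < n`. -/
def RatioBound {n : ℕ} (k : ℕ) (z : Fin n → ℝ) : Prop :=
  ∀ (d : ℕ) (_ : 0 < d) (hdn : d < n),
    z ⟨d, hdn⟩ ^ k ≤ z ⟨n - 1, by omega⟩ ^ (k - 1) * z ⟨d - 1, by omega⟩

theorem tensor_finProdFinEquiv {m k : ℕ} (x : Fin m → ℝ) (c : Fin k → ℝ) (p : Fin m × Fin k) :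
    tensor x c (finProdFinEquiv p) = x p.1 * c p.2 := by
  simp [tensor]

theorem tpow_finFunctionFinEquiv {n k : ℕ} (x : Fin n → ℝ) (f : Fin k → Fin n) :
    tpow x k (finFunctionFinEquiv f) = ∏ j, x (f j) := by
  simp [tpow]

theorem sum_le_sum_of_supMaj_of_threshold {N : ℕ} {X Z : Fin N → ℝ} (h : SupMaj X Z) (t : ℝ)
    (s : Finset (Fin N)) (hs : ∀ i ∈ s, Z i ≤ t) (hs' : ∀ i ∉ s, t ≤ Z i) :
    ∑ i ∈ s, Z i ≤ ∑ i ∈ s, X i := by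
  rcases s.eq_empty_or_nonempty with rfl | hne
  · simp
  · rw [← ESum_eq_of_threshold Z t s hs hs']
    exact (h _ (Finset.card_pos.2 hne) (by simpa using s.card_le_univ)).trans (ESum_le X s)

theorem supMaj_of_supMaj_tpow {n k : ℕ} (hk : 0 < k) {x z : Fin n → ℝ} (hx : Antitone x)
    (hx0 : ∀ i, 0 ≤ x i) (hz : Antitone z) (hpos : ∀ i, 0 < z i) (hsum : ∑ i, z i ≤ ∑ i, x i)
    (hcond : RatioBound k z)
    (h : SupMaj (tpow x k) (tpow z k)) : SupMaj x z := by
  refine supMaj_of_sum_tailSet_le hx hz hsum fun d hd hdn => ?_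
  have hc := hcond d hd hdn
  have key := sum_le_sum_of_supMaj_of_threshold h (z ⟨d, hdn⟩ ^ k)
    ((Fintype.piFinset fun _ : Fin k => tailSet n d).map finFunctionFinEquiv.toEmbedding) ?_ ?_
  · simp only [Finset.sum_map, Equiv.coe_toEmbedding, tpow_finFunctionFinEquiv] at key
    rw [← Finset.prod_univ_sum (fun _ : Fin k => tailSet n d) fun _ i => z i,
      ← Finset.prod_univ_sum (fun _ : Fin k => tailSet n d) fun _ i => x i] at key
    simp only [Finset.prod_const, Finset.card_univ, Fintype.card_fin] at key
    exact le_of_pow_le_pow_left₀ hk.ne' (Finset.sum_nonneg fun i _ => hx0 i) key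
  · intro i hi
    obtain ⟨f, hf, rfl⟩ := Finset.mem_map.1 hi
    rw [Equiv.coe_toEmbedding, tpow_finFunctionFinEquiv]
    calc ∏ j, z (f j) ≤ ∏ _j : Fin k, z ⟨d, hdn⟩ :=
          Finset.prod_le_prod (fun j _ => (hpos _).le) fun j _ =>
            hz (Fin.le_def.2 (mem_tailSet.1 (Fintype.mem_piFinset.1 hf j)))
      _ = _ := by simp
  · intro i hi
    obtain ⟨f, rfl⟩ := finFunctionFinEquiv.surjective i
    have hf : ¬ ∀ j, f j ∈ tailSet n d := fun hf =>
      hi (Finset.mem_map.2 ⟨f, Fintype.mem_piFinset.2 hf, rfl⟩)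
    push Not at hf
    obtain ⟨j, hj⟩ := hf
    rw [mem_tailSet, not_le] at hj
    rw [tpow_finFunctionFinEquiv, ← Finset.prod_erase_mul _ _ (Finset.mem_univ j)]
    refine hc.trans (mul_le_mul ?_ (hz (Fin.le_def.2 (by simp only; omega))) (hpos _).le
      (Finset.prod_nonneg fun _ _ => (hpos _).le))
    calc z ⟨n - 1, by omega⟩ ^ (k - 1)
        = ∏ _j ∈ Finset.univ.erase j, z ⟨n - 1, by omega⟩ := by simp
      _ ≤ _ := Finset.prod_le_prod (fun j _ => (hpos _).le) fun j _ =>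
            hz (Fin.le_def.2 (by simp only; omega))

/-- A catalyst has a final segment whose consecutive ratios are at least `v / u` and which is
separated from the preceding components by a ratio smaller than `v / u`. -/
theorem exists_segment {k : ℕ} (hk : 0 < k) (c : Fin k → ℝ) (u v : ℝ) :
    ∃ (i : ℕ) (_ : i < k),
      (∀ (j : ℕ) (hj : j + 1 < k), i ≤ j → c ⟨j, Nat.lt_of_succ_lt hj⟩ * v ≤ c ⟨j + 1, hj⟩ * u) ∧
      ∀ h : 0 < i, c ⟨i, by omega⟩ * u ≤ c ⟨i - 1, by omega⟩ * v := by
  classical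
  have hex : ∃ i, i < k ∧ ∀ (j : ℕ) (hj : j + 1 < k), i ≤ j →
      c ⟨j, Nat.lt_of_succ_lt hj⟩ * v ≤ c ⟨j + 1, hj⟩ * u :=
    ⟨k - 1, by omega, fun j hj h => absurd h (by omega)⟩
  obtain ⟨h1, h2⟩ := Nat.find_spec hex
  have h3 := fun m (hm : m < Nat.find hex) => Nat.find_min hex hm
  revert h1 h2 h3
  generalize Nat.find hex = i
  intro h1 h2 h3
  refine ⟨i, h1, h2, fun h => ?_⟩
  by_contra! hcon
  refine h3 (i - 1) (by omega) ⟨by omega, fun j hj hij => ?_⟩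
  rcases hij.eq_or_lt with rfl | hij
  · have : i - 1 + 1 = i := by omega
    simp only [this]
    exact hcon.le
  · exact h2 j hj (by omega)

theorem mul_pow_le_mul_pow_of_segment {k i : ℕ} {c : Fin k → ℝ} {u v : ℝ} (hu : 0 ≤ u)
    (hv : 0 ≤ v) (hi : i < k)
    (h : ∀ (j : ℕ) (hj : j + 1 < k), i ≤ j → c ⟨j, Nat.lt_of_succ_lt hj⟩ * v ≤ c ⟨j + 1, hj⟩ * u)
    (m : ℕ) (hm : i + m < k) : c ⟨i, hi⟩ * v ^ m ≤ c ⟨i + m, hm⟩ * u ^ m := by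
  induction m with
  | zero => simp
  | succ m ih =>
    calc c ⟨i, hi⟩ * v ^ (m + 1) = c ⟨i, hi⟩ * v ^ m * v := by ring
      _ ≤ c ⟨i + m, by omega⟩ * u ^ m * v := mul_le_mul_of_nonneg_right (ih (by omega)) hv
      _ = c ⟨i + m, by omega⟩ * v * u ^ m := by ring
      _ ≤ c ⟨i + m + 1, hm⟩ * u * u ^ m :=
        mul_le_mul_of_nonneg_right (h (i + m) hm (by omega)) (pow_nonneg hu _)
      _ = _ := by simp only [add_assoc]; ring

theorem supMaj_of_supMaj_tensor {n k : ℕ} (hk : 0 < k) {x z : Fin n → ℝ} {c : Fin k → ℝ}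
    (hx : Antitone x) (hz : Antitone z) (hpos : ∀ i, 0 < z i) (hsum : ∑ i, z i ≤ ∑ i, x i)
    (hcond : RatioBound k z)
    (hc : Antitone c) (hcpos : ∀ j, 0 < c j)
    (h : SupMaj (tensor x c) (tensor z c)) : SupMaj x z := by
  refine supMaj_of_sum_tailSet_le hx hz hsum fun d hd hdn => ?_
  have hd' := hcond d hd hdn
  set u := z ⟨d, hdn⟩ with hu
  set v := z ⟨n - 1, by omega⟩ with hv
  set p := z ⟨d - 1, by omega⟩ with hp
  have hupos : 0 < u := hpos _
  have hvpos : 0 < v := hpos _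
  have hppos : 0 < p := hpos _
  have hvu : v ≤ u := hz (Fin.le_def.2 (by simp only; omega))
  obtain ⟨i, hi, hseg, hbd⟩ := exists_segment hk c u v
  have hlast : u * c ⟨i, hi⟩ ≤ p * c ⟨k - 1, by omega⟩ := by
    have h1 := mul_pow_le_mul_pow_of_segment hupos.le hvpos.le hi hseg (k - 1 - i) (by omega)
    have h2 : i + (k - 1 - i) = k - 1 := by omega
    simp only [h2] at h1
    have h3 : u * c ⟨i, hi⟩ * u ^ (k - 1) ≤ p * c ⟨k - 1, by omega⟩ * u ^ (k - 1) := by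
      calc u * c ⟨i, hi⟩ * u ^ (k - 1) = c ⟨i, hi⟩ * u ^ k := by
            rw [← mul_pow_sub_one hk.ne' u]; ring
        _ ≤ c ⟨i, hi⟩ * (v ^ (k - 1) * p) := mul_le_mul_of_nonneg_left hd' (hcpos _).le
        _ = c ⟨i, hi⟩ * v ^ (k - 1 - i) * (v ^ i * p) := by
            rw [← h2, pow_add, h2]; ring
        _ ≤ c ⟨k - 1, by omega⟩ * u ^ (k - 1 - i) * (u ^ i * p) := by
            have := hcpos ⟨k - 1, by omega⟩
            gcongr
        _ = p * c ⟨k - 1, by omega⟩ * u ^ (i + (k - 1 - i)) := by rw [pow_add]; ring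
        _ = _ := by rw [h2]
    exact le_of_mul_le_mul_right h3 (pow_pos hupos _)
  have key := sum_le_sum_of_supMaj_of_threshold h (u * c ⟨i, hi⟩)
    ((tailSet n d ×ˢ tailSet k i).map finProdFinEquiv.toEmbedding) ?_ ?_
  · simp only [Finset.sum_map, Equiv.coe_toEmbedding, tensor_finProdFinEquiv] at key
    rw [Finset.sum_product, Finset.sum_product, ← Finset.sum_mul_sum, ← Finset.sum_mul_sum] at key
    exact le_of_mul_le_mul_right key
      (Finset.sum_pos (fun j _ => hcpos j) ⟨⟨i, hi⟩, mem_tailSet.2 le_rfl⟩)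
  · intro q hq
    obtain ⟨⟨a, j⟩, haj, rfl⟩ := Finset.mem_map.1 hq
    rw [Finset.mem_product, mem_tailSet, mem_tailSet] at haj
    rw [Equiv.coe_toEmbedding, tensor_finProdFinEquiv]
    exact mul_le_mul (hz (Fin.le_def.2 haj.1)) (hc (Fin.le_def.2 haj.2)) (hcpos _).le hupos.le
  · intro q hq
    obtain ⟨⟨a, j⟩, rfl⟩ := finProdFinEquiv.surjective q
    rw [tensor_finProdFinEquiv]
    by_cases hj : i ≤ (j : ℕ)
    · have ha : ¬ d ≤ (a : ℕ) := fun ha => hq (Finset.mem_map.2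
        ⟨(a, j), Finset.mem_product.2 ⟨mem_tailSet.2 ha, mem_tailSet.2 hj⟩, rfl⟩)
      refine hlast.trans (mul_le_mul (hz (Fin.le_def.2 ?_)) (hc (Fin.le_def.2 ?_))
        (hcpos _).le (hpos _).le) <;> simp only <;> omega
    · calc u * c ⟨i, hi⟩ = c ⟨i, hi⟩ * u := mul_comm _ _
        _ ≤ c ⟨i - 1, by omega⟩ * v := hbd (by omega)
        _ = v * c ⟨i - 1, by omega⟩ := mul_comm _ _
        _ ≤ z a * c j := by
          refine mul_le_mul (hz (Fin.le_def.2 ?_)) (hc (Fin.le_def.2 ?_))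
            (hcpos _).le (hpos _).le <;> simp only <;> omega

/-- The vector whose first `d` components are `b` and whose remaining components are `a`. -/
def twoLevel (n d : ℕ) (a b : ℝ) : Fin n → ℝ := fun i => if (i : ℕ) < d then b else a

theorem sum_tailSet_twoLevel {n d : ℕ} (hd : d ≤ n) (a b : ℝ) :
    ∑ i ∈ tailSet n d, twoLevel n d a b i = (n - d : ℝ) * a := by
  have h : ∀ i ∈ tailSet n d, twoLevel n d a b i = a := fun i hi =>
    if_neg (not_lt.2 (mem_tailSet.1 hi))
  rw [Finset.sum_congr rfl h, Finset.sum_const, card_tailSet hd, nsmul_eq_mul,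
    Nat.cast_sub hd]

theorem card_compl_tailSet {n d : ℕ} (hd : d ≤ n) : (tailSet n d)ᶜ.card = d := by
  rw [Finset.card_compl, card_tailSet hd, Fintype.card_fin]; omega

theorem sum_twoLevel {n d : ℕ} (hd : d ≤ n) (a b : ℝ) :
    ∑ i, twoLevel n d a b i = d * b + (n - d : ℝ) * a := by
  have h : ∀ i ∈ (tailSet n d)ᶜ, twoLevel n d a b i = b := fun i hi =>
    if_pos (not_le.1 (mt mem_tailSet.2 (Finset.mem_compl.1 hi)))
  rw [← Finset.sum_compl_add_sum (tailSet n d), sum_tailSet_twoLevel hd,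
    Finset.sum_congr rfl h, Finset.sum_const,
    card_compl_tailSet hd, nsmul_eq_mul]

theorem antitone_twoLevel (n d : ℕ) {a b : ℝ} (h : a ≤ b) : Antitone (twoLevel n d a b) := by
  intro i j hij
  have := Fin.le_def.1 hij
  unfold twoLevel
  split_ifs <;> first | exact le_rfl | exact h | omega

theorem exists_levels {n d : ℕ} {z : Fin n → ℝ} (hz : Antitone z) (hsum : ∑ i, z i < 1)
    (hd : 0 < d) (hdn : d < n) (hvu : z ⟨n - 1, by omega⟩ < z ⟨d, hdn⟩) :
    ∃ a b : ℝ, (n - d : ℝ) * a = ∑ i ∈ tailSet n d, z i ∧ d * b + (n - d : ℝ) * a = 1 ∧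
      z ⟨n - 1, by omega⟩ < a ∧ a < z ⟨d, hdn⟩ ∧ z ⟨d, hdn⟩ < b := by
  have hl : (0 : ℝ) < n - d := sub_pos.2 (Nat.cast_lt.2 hdn)
  have hd' : (0 : ℝ) < d := Nat.cast_pos.2 hd
  have hcard : ∀ r : ℝ, ∑ _i ∈ tailSet n d, r = (n - d : ℝ) * r := fun r => by
    rw [Finset.sum_const, card_tailSet hdn.le, nsmul_eq_mul, Nat.cast_sub hdn.le]
  set S := ∑ i ∈ tailSet n d, z i with hS
  have hla : (n - d : ℝ) * (S / (n - d)) = S := mul_div_cancel₀ _ hl.ne'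
  have hdb : d * ((1 - S) / d) = 1 - S := mul_div_cancel₀ _ hd'.ne'
  refine ⟨S / (n - d), (1 - S) / d, hla, by rw [hla, hdb]; ring, ?_, ?_, ?_⟩
  · refine lt_of_mul_lt_mul_left ?_ hl.le
    rw [hla, ← hcard]
    exact Finset.sum_lt_sum (fun i _ => hz (Fin.le_def.2 (by simp only; omega)))
      ⟨⟨d, hdn⟩, mem_tailSet.2 le_rfl, hvu⟩
  · refine lt_of_mul_lt_mul_left ?_ hl.le
    rw [hla, ← hcard]
    exact Finset.sum_lt_sum (fun i hi => hz (Fin.le_def.2 (mem_tailSet.1 hi)))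
      ⟨⟨n - 1, by omega⟩, mem_tailSet.2 (by simp only; omega), hvu⟩
  · refine lt_of_mul_lt_mul_left ?_ hd'.le
    rw [hdb]
    have h1 : (d : ℝ) * z ⟨d, hdn⟩ ≤ ∑ i ∈ (tailSet n d)ᶜ, z i := by
      have h : (d : ℝ) * z ⟨d, hdn⟩ = ∑ _i ∈ (tailSet n d)ᶜ, z ⟨d, hdn⟩ := by
        rw [Finset.sum_const, card_compl_tailSet hdn.le, nsmul_eq_mul]
      rw [h]
      refine Finset.sum_le_sum fun i hi => hz (Fin.le_def.2 ?_)
      have := mt mem_tailSet.2 (Finset.mem_compl.1 hi)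
      simp only; omega
    have h2 := Finset.sum_compl_add_sum (tailSet n d) z
    linarith

section Levels

variable {n d : ℕ} {z : Fin n → ℝ} {a b : ℝ}

theorem hinge_twoLevel_of_le (hab : a ≤ b) {t : ℝ} (ht : t ≤ a) :
    hinge (twoLevel n d a b) t = 0 := by
  refine Finset.sum_eq_zero fun i _ => max_eq_right ?_
  unfold twoLevel
  split_ifs <;> linarith

theorem hinge_twoLevel_of_mem (hd : d ≤ n) {t : ℝ} (ht : a ≤ t) (htb : t ≤ b) :
    hinge (twoLevel n d a b) t = (n - d : ℝ) * (t - a) := by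
  rw [hinge_eq_of_threshold _ t (tailSet n d), sum_tailSet_twoLevel hd, card_tailSet hd,
    Nat.cast_sub hd]
  · ring
  · intro i hi
    rw [twoLevel, if_neg (not_lt.2 (mem_tailSet.1 hi))]
    exact ht
  · intro i hi
    rw [twoLevel, if_pos (not_le.1 (mt mem_tailSet.2 hi))]
    exact htb

theorem hinge_twoLevel_lt_of_gt (hd : d ≤ n) (hsum : ∑ i, z i < 1)
    (hb : d * b + (n - d : ℝ) * a = 1) (hab : a ≤ b) {t : ℝ} (ht : b ≤ t) :
    hinge (twoLevel n d a b) t < hinge z t := by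
  have h1 := card_mul_sub_sum_le_hinge z t Finset.univ
  rw [hinge_eq_of_threshold _ t Finset.univ _ (by simp), sum_twoLevel hd, hb]
  · linarith
  · intro i _
    unfold twoLevel
    split_ifs <;> linarith

theorem hinge_twoLevel_le (hd : d ≤ n) (hsum : ∑ i, z i < 1)
    (ha : (n - d : ℝ) * a = ∑ i ∈ tailSet n d, z i) (hb : d * b + (n - d : ℝ) * a = 1)
    (hab : a ≤ b) (t : ℝ) : hinge (twoLevel n d a b) t ≤ hinge z t := by
  rcases le_total t a with ht | ht
  · rw [hinge_twoLevel_of_le hab ht]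
    exact hinge_nonneg z t
  · rcases le_total t b with htb | htb
    · rw [hinge_twoLevel_of_mem hd ht htb]
      have h1 := card_mul_sub_sum_le_hinge z t (tailSet n d)
      rw [card_tailSet hd, Nat.cast_sub hd] at h1
      linarith
    · exact (hinge_twoLevel_lt_of_gt hd hsum hb hab htb).le

theorem hinge_twoLevel_lt_of_mem_Ioo (hd : d < n) (hsum : ∑ i, z i < 1)
    (ha : (n - d : ℝ) * a = ∑ i ∈ tailSet n d, z i) (hb : d * b + (n - d : ℝ) * a = 1)
    (hab : a ≤ b) {t : ℝ} (ht : z ⟨n - 1, by omega⟩ < t) (htu : t < z ⟨d, hd⟩) :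
    hinge (twoLevel n d a b) t < hinge z t := by
  rcases le_total t a with hta | hta
  · rw [hinge_twoLevel_of_le hab hta]
    have h1 := card_mul_sub_sum_le_hinge z t {⟨n - 1, by omega⟩}
    simp only [Finset.card_singleton, Finset.sum_singleton, Nat.cast_one, one_mul] at h1
    linarith
  · rcases le_total t b with htb | htb
    · rw [hinge_twoLevel_of_mem hd.le hta htb]
      have hmem : (⟨d, hd⟩ : Fin n) ∈ tailSet n d := mem_tailSet.2 le_rfl
      have h1 := card_mul_sub_sum_le_hinge z t ((tailSet n d).erase ⟨d, hd⟩)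
      have h2 := Finset.add_sum_erase _ z hmem
      have h3 := Finset.card_erase_add_one hmem
      rw [card_tailSet hd.le] at h3
      have h4 : (((tailSet n d).erase ⟨d, hd⟩).card : ℝ) + 1 = n - d := by
        rw [← Nat.cast_sub hd.le, ← h3]; push_cast; rfl
      have h5 : (((tailSet n d).erase ⟨d, hd⟩).card : ℝ) = n - d - 1 := by linarith
      rw [h5] at h1
      linarith
    · exact hinge_twoLevel_lt_of_gt hd.le hsum hb hab htb

theorem hinge_twoLevel_lt_of_lt (hd : 0 < d) (hdn : d < n) (hsum : ∑ i, z i < 1)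
    (ha : (n - d : ℝ) * a = ∑ i ∈ tailSet n d, z i) (hb : d * b + (n - d : ℝ) * a = 1)
    (hab : a ≤ b) {t : ℝ} (hat : a ≤ t) (ht : z ⟨d - 1, by omega⟩ < t) :
    hinge (twoLevel n d a b) t < hinge z t := by
  rcases le_total t b with htb | htb
  · rw [hinge_twoLevel_of_mem hdn.le hat htb]
    have hmem : (⟨d - 1, by omega⟩ : Fin n) ∉ tailSet n d := fun h => by
      have := mem_tailSet.1 h
      simp only at this; omega
    have h1 := card_mul_sub_sum_le_hinge z t (insert ⟨d - 1, by omega⟩ (tailSet n d))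
    rw [Finset.sum_insert hmem, Finset.card_insert_of_notMem hmem, card_tailSet hdn.le] at h1
    push_cast [Nat.cast_sub hdn.le] at h1
    linarith
  · exact hinge_twoLevel_lt_of_gt hdn.le hsum hb hab htb

end Levels

/-- If the hinge sums of the image of a suitable two-level vector are strictly below those of
`Z`, a nearby vector still maps below `Z` but is not super-majorized by `z`. -/
theorem exists_not_supMaj {n d N : ℕ} {z : Fin n → ℝ} {a b : ℝ} (hz : Antitone z)
    (hdn : d < n) (ha0 : 0 < a) (hab : a < b)
    (ha : (n - d : ℝ) * a = ∑ i ∈ tailSet n d, z i) (hb : d * b + (n - d : ℝ) * a = 1)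
    (hd : 0 < d)
    (Φ : (Fin n → ℝ) → Fin N → ℝ) (hΦ : Continuous Φ) (Z : Fin N → ℝ) (m : ℝ)
    (hm : ∀ i, m < Φ (twoLevel n d a b) i)
    (h : ∀ t, m < t → hinge (Φ (twoLevel n d a b)) t < hinge Z t) :
    ∃ x ∈ Vn n, SupMaj (Φ x) Z ∧ ¬ SupMaj x z := by
  have hl : (0 : ℝ) < n - d := sub_pos.2 (Nat.cast_lt.2 hdn)
  have hd' : (0 : ℝ) < d := Nat.cast_pos.2 hd
  let x : ℝ → Fin n → ℝ := fun ε => twoLevel n d (a - d * ε) (b + (n - d) * ε)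
  have hx0 : x 0 = twoLevel n d a b := by simp [x]
  have hxc : Continuous x := by
    refine continuous_pi fun i => ?_
    simp only [x, twoLevel]
    split_ifs <;> fun_prop
  have h1 : ∀ᶠ ε in nhdsWithin (0 : ℝ) (Set.Ioi 0),
      ∀ s : Finset (Fin N), s.Nonempty → ESum Z s.card < ∑ i ∈ s, Φ (x ε) i := by
    refine nhdsWithin_le_nhds (Filter.eventually_all.2 fun s => ?_)
    by_cases hs : s.Nonempty
    · have hcont : Continuous fun ε => ∑ i ∈ s, Φ (x ε) i :=
        continuous_finsetSum _ fun i _ => (continuous_apply i).comp (hΦ.comp hxc)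
      have h0 : ESum Z s.card < ∑ i ∈ s, Φ (x 0) i := by
        rw [hx0]
        exact ESum_lt_sum _ _ m hm h s hs
      filter_upwards [hcont.continuousAt.eventually (lt_mem_nhds h0)] with ε hε _ using hε
    · exact Filter.Eventually.of_forall fun _ hs' => absurd hs' hs
  have h2 : ∀ᶠ ε in nhdsWithin (0 : ℝ) (Set.Ioi 0), 0 < a - d * ε := by
    refine nhdsWithin_le_nhds ?_
    have hcont : Continuous fun ε : ℝ => a - d * ε := by fun_prop
    exact hcont.continuousAt.eventually (lt_mem_nhds (by simpa using ha0))
  obtain ⟨ε, hε1, hε2, hε⟩ := (h1.and (h2.and self_mem_nhdsWithin)).exists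
  have hε : 0 < ε := hε
  have hle : a - d * ε ≤ b + (n - d) * ε := by nlinarith
  have hanti : Antitone (x ε) := antitone_twoLevel n d hle
  refine ⟨x ε, ⟨fun i => ?_, ?_, hanti⟩, fun l hl1 hlN => ?_, fun hcon => ?_⟩
  · simp only [x, twoLevel]
    split_ifs <;> linarith
  · simp only [x]
    rw [sum_twoLevel hdn.le]
    linarith
  · refine le_ESum _ _ hlN _ fun s hs => ?_
    subst hs
    exact (hε1 s (Finset.card_pos.1 hl1)).le
  · have := hcon (n - d) (by omega) (by omega)
    rw [ESum_eq_sum_tailSet hanti hdn, ESum_eq_sum_tailSet hz hdn,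
      sum_tailSet_twoLevel hdn.le, ← ha] at this
    have : (0 : ℝ) < (n - d) * (d * ε) := by positivity
    linarith

theorem le_twoLevel (n d : ℕ) {a b : ℝ} (h : a ≤ b) (i : Fin n) : a ≤ twoLevel n d a b i := by
  unfold twoLevel
  split_ifs <;> first | exact le_rfl | exact h

theorem mul_le_and_le_mul_of_hinge_le {n d : ℕ} {z : Fin n → ℝ} {a b : ℝ} (hd : 0 < d)
    (hdn : d < n) (hsum : ∑ i, z i < 1)
    (ha : (n - d : ℝ) * a = ∑ i ∈ tailSet n d, z i) (hb : d * b + (n - d : ℝ) * a = 1)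
    (hab : a ≤ b) (hau : a ≤ z ⟨d, hdn⟩) {w t : ℝ} (hw : 0 < w)
    (h : hinge (fun i => z i * w) t ≤ hinge (fun i => twoLevel n d a b i * w) t)
    (ht : z ⟨n - 1, by omega⟩ * w < t) :
    z ⟨d, hdn⟩ * w ≤ t ∧ t ≤ z ⟨d - 1, by omega⟩ * w := by
  rw [hinge_mul _ hw, hinge_mul _ hw] at h
  have h := le_of_mul_le_mul_left h hw
  rw [← lt_div_iff₀ hw] at ht
  have hu : z ⟨d, hdn⟩ ≤ t / w := by
    by_contra! hcon
    exact absurd h (not_le.2 (hinge_twoLevel_lt_of_mem_Ioo hdn hsum ha hb hab ht hcon))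
  refine ⟨(le_div_iff₀ hw).1 hu, ?_⟩
  by_contra! hcon
  exact absurd h (not_le.2 (hinge_twoLevel_lt_of_lt hd hdn hsum ha hb hab (hau.trans hu)
    ((lt_div_iff₀ hw).2 hcon)))

theorem lt_of_pow_mul_lt {k : ℕ} {u v p : ℝ} (hk : 0 < k) (hu : 0 ≤ u)
    (hup : u ≤ p) (h : v ^ (k - 1) * p < u ^ k) : v < u := by
  by_contra! hcon
  have h1 : u ^ (k - 1) * u ≤ v ^ (k - 1) * p :=
    mul_le_mul (pow_le_pow_left₀ hu hcon _) hup hu (pow_nonneg (hu.trans hcon) _)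
  rw [pow_sub_one_mul hk.ne'] at h1
  linarith

theorem one_lt_of_pow_mul_lt {k : ℕ} {u v p : ℝ} (hk : 0 < k) (hup : u ≤ p)
    (h : v ^ (k - 1) * p < u ^ k) : 1 < k := by
  by_contra! hcon
  obtain rfl : k = 1 := by omega
  simp only [Nat.sub_self, pow_zero, one_mul, pow_one] at h
  linarith

theorem exists_word_prod {n : ℕ} (z : Fin n → ℝ) (p q : Fin n) {k i j : ℕ} (h : i + j = k) :
    ∃ f : Fin k → Fin n, ∏ l, z (f l) = z p ^ i * z q ^ j := by
  subst h
  exact ⟨Fin.append (fun _ => p) fun _ => q, by simp [Fin.prod_univ_add]⟩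

theorem exists_tpow_not_supMaj {n k d : ℕ} {z : Fin n → ℝ} (hk : 0 < k) (hz : Antitone z)
    (hpos : ∀ i, 0 < z i) (hsum : ∑ i, z i < 1) (hd : 0 < d) (hdn : d < n)
    (hlt : z ⟨n - 1, by omega⟩ ^ (k - 1) * z ⟨d - 1, by omega⟩ < z ⟨d, hdn⟩ ^ k) :
    ∃ x ∈ Vn n, SupMaj (tpow x k) (tpow z k) ∧ ¬ SupMaj x z := by
  have hup : z ⟨d, hdn⟩ ≤ z ⟨d - 1, by omega⟩ := hz (Fin.le_def.2 (by simp only; omega))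
  have hk1 := one_lt_of_pow_mul_lt hk hup hlt
  have hvu := lt_of_pow_mul_lt hk (hpos _).le hup hlt
  obtain ⟨a, b, ha, hb, hva, hau, hub⟩ := exists_levels hz hsum hd hdn hvu
  have hab := hau.trans hub
  have ha0 := (hpos _).trans hva
  have hle := hinge_twoLevel_le hdn.le hsum ha hb hab.le
  have hgood := fun {w t : ℝ} => mul_le_and_le_mul_of_hinge_le (w := w) (t := t) hd hdn hsum ha hb
    hab.le hau.le
  obtain ⟨k, rfl⟩ : ∃ m, k = m + 2 := ⟨k - 2, by omega⟩
  have hx0 : ∀ i, 0 ≤ twoLevel n d a b i := fun i => ha0.le.trans (le_twoLevel n d hab.le i)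
  have hz0 : ∀ i, 0 ≤ z i := fun i => (hpos i).le
  refine exists_not_supMaj hz hdn ha0 hab ha hb hd (fun x => tpow x (k + 2)) ?_ _
    (z ⟨n - 1, by omega⟩ ^ (k + 2)) ?_ ?_
  · unfold tpow
    fun_prop
  · intro i
    calc z ⟨n - 1, by omega⟩ ^ (k + 2) < a ^ (k + 2) := pow_lt_pow_left₀ hva (hpos _).le (by omega)
      _ = ∏ _j : Fin (k + 2), a := by simp
      _ ≤ _ := Finset.prod_le_prod (fun _ _ => ha0.le) fun _ _ => le_twoLevel n d hab.le _
  · intro t ht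
    by_contra! hcon
    rw [hinge_tpow, hinge_tpow] at hcon
    have hxlast : twoLevel n d a b ⟨n - 1, by omega⟩ = a := if_neg (by simp only; omega)
    set u := z ⟨d, hdn⟩ with hu
    set v := z ⟨n - 1, by omega⟩ with hv
    set p := z ⟨d - 1, by omega⟩ with hp
    have hu0 : 0 < u := hpos _
    have hv0 : 0 < v := hpos _
    have hword : ∀ i j, i + j = k + 1 → v * (u ^ i * v ^ j) < t →
        u * (u ^ i * v ^ j) ≤ t ∧ t ≤ p * (u ^ i * v ^ j) := by
      intro i j hij
      obtain ⟨f, hf⟩ := exists_word_prod z ⟨d, hdn⟩ ⟨n - 1, by omega⟩ hij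
      refine hgood (by positivity) ?_
      by_contra! hlt'
      refine absurd hcon (not_le.2 (powHinge_lt_of_hinge_lt hx0 hz0 hle (k + 1) 1 zero_le_one t f ?_))
      rw [hf, one_mul]
      exact hlt'
    have hword' : ∀ i j, i + j = k → v * (a * (u ^ i * v ^ j)) < t →
        u * (a * (u ^ i * v ^ j)) ≤ t := by
      intro i j hij ht'
      obtain ⟨f, hf⟩ := exists_word_prod z ⟨d, hdn⟩ ⟨n - 1, by omega⟩ hij
      refine (hgood (by positivity) ?_ ht').1
      by_contra! hlt'
      refine absurd hcon (not_le.2 (powHinge_succ_lt hx0 hz0 hle (k + 1) 1 zero_le_one t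
        ⟨n - 1, by omega⟩ (powHinge_lt_of_hinge_lt hx0 hz0 hle k _ ?_ t f ?_)))
      · rw [hxlast, one_mul]
        exact ha0.le
      · rw [hf, one_mul, hxlast]
        exact hlt'
    have hbase : v * (u ^ 0 * v ^ (k + 1)) < t := by
      calc v * (u ^ 0 * v ^ (k + 1)) = v ^ (k + 2) := by ring
        _ < t := ht
    have hchain : ∀ i j, i + j = k + 1 → u * (u ^ i * v ^ j) ≤ t := by
      intro i
      induction i with
      | zero =>
        intro j hj
        obtain rfl : j = k + 1 := by omega
        exact (hword 0 (k + 1) hj hbase).1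
      | succ i ih =>
        intro j hj
        have hw : 0 < u ^ i * v ^ j := by positivity
        have h1 := ih (j + 1) (by omega)
        have h2 := hword' i j (by omega) (by
          calc v * (a * (u ^ i * v ^ j)) < v * (u * (u ^ i * v ^ j)) := by gcongr
            _ = u * (u ^ i * v ^ (j + 1)) := by ring
            _ ≤ t := h1)
        refine (hword (i + 1) j hj ?_).1
        calc v * (u ^ (i + 1) * v ^ j) = u * (v * (u ^ i * v ^ j)) := by ring
          _ < u * (a * (u ^ i * v ^ j)) := by gcongr
          _ ≤ t := h2
    have h1 := hchain (k + 1) 0 (by omega)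
    have h2 := (hword 0 (k + 1) (by omega) hbase).2
    have h3 : v ^ (k + 1) * p < u ^ (k + 2) := hlt
    have h4 : u * (u ^ (k + 1) * v ^ 0) = u ^ (k + 2) := by ring
    have h5 : p * (u ^ 0 * v ^ (k + 1)) = v ^ (k + 1) * p := by ring
    linarith

theorem exists_catalyst {k : ℕ} (hk : 1 < k) {u v p : ℝ} (hu : 0 < u) (hv : 0 < v)
    (hup : u ≤ p) (hlt : v ^ (k - 1) * p < u ^ k) :
    ∃ c : Fin k → ℝ, (∀ j, 0 < c j) ∧ ∑ j, c j = 1 ∧ Antitone c ∧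
      (∀ (j : ℕ) (hj : j + 1 < k), v * c ⟨j, Nat.lt_of_succ_lt hj⟩ < u * c ⟨j + 1, hj⟩) ∧
      p * c ⟨k - 1, by omega⟩ < u * c ⟨0, by omega⟩ := by
  have hp : 0 < p := hu.trans_le hup
  have h0 : (v / u) ^ (k - 1) < u / p := by
    rw [div_pow, div_lt_div_iff₀ (by positivity) hp, mul_pow_sub_one (by omega)]
    exact hlt
  have hcont : Continuous fun α : ℝ => α ^ (k - 1) := by fun_prop
  have h1 : ∀ᶠ α in nhdsWithin (v / u) (Set.Ioi (v / u)), α ^ (k - 1) < u / p :=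
    nhdsWithin_le_nhds (hcont.continuousAt.eventually (gt_mem_nhds h0))
  obtain ⟨α, hα1, hα2⟩ := (h1.and self_mem_nhdsWithin).exists
  have hα2 : v / u < α := hα2
  have hα0 : 0 < α := (div_pos hv hu).trans hα2
  have hα : α < 1 := by
    refine (pow_lt_one_iff_of_nonneg hα0.le (by omega : k - 1 ≠ 0)).1
      (hα1.trans_le ((div_le_one hp).2 hup))
  have hS : 0 < ∑ j : Fin k, α ^ (j : ℕ) :=
    Finset.sum_pos (fun j _ => pow_pos hα0 _) ⟨⟨0, by omega⟩, Finset.mem_univ _⟩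
  refine ⟨fun j => α ^ (j : ℕ) / ∑ j : Fin k, α ^ (j : ℕ), fun j => by positivity, ?_, ?_, ?_, ?_⟩
  · rw [← Finset.sum_div, div_self hS.ne']
  · intro i j hij
    exact div_le_div_of_nonneg_right (pow_le_pow_of_le_one hα0.le hα.le (Fin.le_def.1 hij)) hS.le
  · intro j hj
    rw [← mul_div_assoc, ← mul_div_assoc]
    refine div_lt_div_of_pos_right ?_ hS
    rw [pow_succ', ← mul_assoc]
    exact mul_lt_mul_of_pos_right (by rwa [div_lt_iff₀ hu, mul_comm] at hα2) (pow_pos hα0 _)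
  · rw [← mul_div_assoc, ← mul_div_assoc]
    refine div_lt_div_of_pos_right ?_ hS
    rw [lt_div_iff₀ hp, mul_comm] at hα1
    simpa using hα1

theorem exists_tensor_not_supMaj {n k d : ℕ} {z : Fin n → ℝ} (hk : 0 < k) (hz : Antitone z)
    (hpos : ∀ i, 0 < z i) (hsum : ∑ i, z i < 1) (hd : 0 < d) (hdn : d < n)
    (hlt : z ⟨n - 1, by omega⟩ ^ (k - 1) * z ⟨d - 1, by omega⟩ < z ⟨d, hdn⟩ ^ k) :
    ∃ x ∈ Vn n, ∃ c : Fin k → ℝ, ((∀ j, 0 < c j) ∧ ∑ j, c j = 1 ∧ Antitone c ∧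
      SupMaj (tensor x c) (tensor z c)) ∧ ¬ SupMaj x z := by
  have hup : z ⟨d, hdn⟩ ≤ z ⟨d - 1, by omega⟩ := hz (Fin.le_def.2 (by simp only; omega))
  have hk1 := one_lt_of_pow_mul_lt hk hup hlt
  have hvu := lt_of_pow_mul_lt hk (hpos _).le hup hlt
  obtain ⟨a, b, ha, hb, hva, hau, hub⟩ := exists_levels hz hsum hd hdn hvu
  have hab := hau.trans hub
  have ha0 := (hpos _).trans hva
  have hle := hinge_twoLevel_le hdn.le hsum ha hb hab.le
  obtain ⟨c, hc0, hc1, hc, hratio, hends⟩ := exists_catalyst hk1 (hpos _) (hpos _) hup hlt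
  obtain ⟨x, hx, hmaj, hnot⟩ := exists_not_supMaj hz hdn ha0 hab ha hb hd (fun x => tensor x c)
    (by unfold tensor; fun_prop) (tensor z c) (z ⟨n - 1, by omega⟩ * c ⟨k - 1, by omega⟩)
    (fun i => mul_lt_mul (hva.trans_le (le_twoLevel n d hab.le _))
      (hc (Fin.le_def.2 (by simp only; omega))) (hc0 _)
      (ha0.le.trans (le_twoLevel n d hab.le _))) (by
      intro t ht
      by_contra! hcon
      rw [hinge_tensor, hinge_tensor] at hcon
      have hword : ∀ j : Fin k, z ⟨n - 1, by omega⟩ * c j < t →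
          z ⟨d, hdn⟩ * c j ≤ t ∧ t ≤ z ⟨d - 1, by omega⟩ * c j := by
        intro j
        refine mul_le_and_le_mul_of_hinge_le hd hdn hsum ha hb hab.le hau.le (hc0 j) ?_
        by_contra! hlt'
        exact absurd hcon (not_le.2 (Finset.sum_lt_sum
          (fun i _ => hinge_mul_le hle (hc0 i).le t) ⟨j, Finset.mem_univ j, hlt'⟩))
      have hchain : ∀ m (hm : m < k), z ⟨d, hdn⟩ * c ⟨k - 1 - m, by omega⟩ ≤ t := by
        intro m
        induction m with
        | zero => exact fun _ => (hword _ ht).1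
        | succ m ih =>
          intro hm
          refine (hword _ ((hratio (k - 1 - (m + 1)) (by omega)).trans_le ?_)).1
          have h1 : k - 1 - (m + 1) + 1 = k - 1 - m := by omega
          simp only [h1]
          exact ih (by omega)
      have h1 := hchain (k - 1) (by omega)
      simp only [Nat.sub_self] at h1
      have h2 := (hword _ ht).2
      linarith)
  exact ⟨x, hx, c, ⟨hc0, hc1, hc, hmaj⟩, hnot⟩

theorem mul_tensor {n k : ℕ} (r : ℝ) (y : Fin n → ℝ) (c : Fin k → ℝ) :
    (fun i => r * tensor y c i) = tensor (fun i => r * y i) c := by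
  funext i
  simp [tensor, mul_assoc]

theorem mul_tpow {n : ℕ} (k : ℕ) (r : ℝ) (y : Fin n → ℝ) :
    (fun i => r ^ k * tpow y k i) = tpow (fun i => r * y i) k := by
  funext i
  simp [tpow, Finset.prod_mul_distrib]

section Equivalences

variable {n k : ℕ} {lam : ℝ} {y : Fin n → ℝ}

theorem ratioBound_mul_iff (hk : 0 < k) (hlam : 0 < lam) :
    RatioBound k (fun i => lam * y i) ↔ RatioBound k y := by
  have h : ∀ u v p : ℝ, (lam * u) ^ k ≤ (lam * v) ^ (k - 1) * (lam * p) ↔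
      u ^ k ≤ v ^ (k - 1) * p := fun u v p => by
    have h : (lam * v) ^ (k - 1) * (lam * p) = lam ^ k * (v ^ (k - 1) * p) := by
      rw [mul_pow, ← pow_sub_one_mul hk.ne' lam]; ring
    rw [h, mul_pow, mul_le_mul_iff_of_pos_left (pow_pos hlam k)]
  simp only [RatioBound, h]

theorem Slam_subset_Tklam (hk : 0 < k) : Slam lam y ⊆ Tklam k lam y := by
  rintro x ⟨hx, hmaj⟩
  have hk' : (0 : ℝ) < k := Nat.cast_pos.2 hk
  refine ⟨hx, fun _ => (k : ℝ)⁻¹, fun _ => by positivity, ?_, antitone_const, ?_⟩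
  · simp [hk'.ne']
  · rw [mul_tensor]
    exact hmaj.tensor fun _ => by positivity

theorem Slam_subset_Mklam (hlam : 0 ≤ lam) (hy : ∀ i, 0 ≤ y i) :
    Slam lam y ⊆ Mklam k lam y := by
  rintro x ⟨hx, hmaj⟩
  refine ⟨hx, ?_⟩
  rw [mul_tpow]
  exact hmaj.tpow hx.1 (fun i => mul_nonneg hlam (hy i)) k

theorem Tklam_eq_Slam_iff (hk : 0 < k) (hlam : 0 < lam ∧ lam < 1) (hy : y ∈ Vn n)
    (hypos : ∀ i, 0 < y i) :
    Tklam k lam y = Slam lam y ↔ RatioBound k y := by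
  have hz : Antitone fun i => lam * y i := fun i j hij =>
    mul_le_mul_of_nonneg_left (hy.2.2 hij) hlam.1.le
  have hpos : ∀ i, 0 < lam * y i := fun i => mul_pos hlam.1 (hypos i)
  have hsum : ∑ i, lam * y i < 1 := by rw [← Finset.mul_sum, hy.2.1, mul_one]; exact hlam.2
  constructor
  · intro h
    rw [← ratioBound_mul_iff hk hlam.1]
    intro d hd hdn
    by_contra! hcon
    obtain ⟨x, hx, c, ⟨hc0, hc1, hc, hmaj⟩, hnot⟩ :=
      exists_tensor_not_supMaj hk hz hpos hsum hd hdn hcon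
    rw [← mul_tensor] at hmaj
    exact hnot (h ▸ ⟨hx, c, hc0, hc1, hc, hmaj⟩ : x ∈ Slam lam y).2
  · refine fun h => Set.Subset.antisymm ?_ (Slam_subset_Tklam hk)
    rintro x ⟨hx, c, hc0, hc1, hc, hmaj⟩
    rw [mul_tensor] at hmaj
    exact ⟨hx, supMaj_of_supMaj_tensor hk hx.2.2 hz hpos (hx.2.1 ▸ hsum.le)
      ((ratioBound_mul_iff hk hlam.1).2 h) hc hc0 hmaj⟩

theorem Mklam_eq_Slam_iff (hk : 0 < k) (hlam : 0 < lam ∧ lam < 1) (hy : y ∈ Vn n)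
    (hypos : ∀ i, 0 < y i) :
    Mklam k lam y = Slam lam y ↔ RatioBound k y := by
  have hz : Antitone fun i => lam * y i := fun i j hij =>
    mul_le_mul_of_nonneg_left (hy.2.2 hij) hlam.1.le
  have hpos : ∀ i, 0 < lam * y i := fun i => mul_pos hlam.1 (hypos i)
  have hsum : ∑ i, lam * y i < 1 := by rw [← Finset.mul_sum, hy.2.1, mul_one]; exact hlam.2
  constructor
  · intro h
    rw [← ratioBound_mul_iff hk hlam.1]
    intro d hd hdn
    by_contra! hcon
    obtain ⟨x, hx, hmaj, hnot⟩ := exists_tpow_not_supMaj hk hz hpos hsum hd hdn hcon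
    rw [← mul_tpow] at hmaj
    exact hnot (h ▸ ⟨hx, hmaj⟩ : x ∈ Slam lam y).2
  · refine fun h => Set.Subset.antisymm ?_ (Slam_subset_Mklam hlam.1.le fun i => (hypos i).le)
    rintro x ⟨hx, hmaj⟩
    rw [mul_tpow] at hmaj
    exact ⟨hx, supMaj_of_supMaj_tpow hk hx.2.2 hx.1 hz hpos (hx.2.1 ▸ hsum.le)
      ((ratioBound_mul_iff hk hlam.1).2 h) hmaj⟩

end Equivalences

/-- Theorem 4 of the paper. The equivalence of
`T_k^λ(y) = S^λ(y)`, `M_k^λ(y) = S^λ(y)`, and `y_{d+1}^k ≤ y_n^{k-1} y_d`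
for all `0 < d < n-1` (1-based indices in the informal statement). -/
theorem stmt3 {n k : ℕ} (hk : 0 < k) (lam : ℝ) (hlam : 0 < lam ∧ lam < 1)
    (y : Fin n → ℝ) (hy : y ∈ Vn n) (hypos : ∀ i, 0 < y i) :
    (Tklam k lam y = Slam lam y ↔ Mklam k lam y = Slam lam y) ∧
    (Tklam k lam y = Slam lam y ↔ ∀ (d : ℕ) (hd1 : 0 < d) (hd2 : d + 1 < n),
      y ⟨d, by omega⟩ ^ k ≤ y ⟨n - 1, by omega⟩ ^ (k - 1) * y ⟨d - 1, by omega⟩) := by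
  rw [Tklam_eq_Slam_iff hk hlam hy hypos, Mklam_eq_Slam_iff hk hlam hy hypos]
  refine ⟨Iff.rfl, fun h d hd1 hd2 => h d hd1 (by omega), fun h d hd hdn => ?_⟩
  by_cases hd2 : d + 1 < n
  · exact h d hd hd2
  · obtain rfl : d = n - 1 := by omega
    rw [← pow_sub_one_mul hk.ne']
    exact mul_le_mul_of_nonneg_left (hy.2.2 (Fin.le_def.2 (by simp only; omega)))
      (pow_nonneg (hypos _).le _)

end
end

section
/- Let z ∈ V^k be a nonuniform probability vector with positive components (z_1 > z_k > 0) and let n ≥ 4. Then the set A(z) = {y ∈ V^n : S(y) ⊊ T(y,z)} contains a nonempty subset that is open in V^n (with the subspace topology inherited from ℝ^n); in particular, z serves as a catalyst in producing uncountably many target states y ∈ V^n. -/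
noncomputable section

/-- The sum of the first `m` components of `x`. -/
def prefixSum {n : ℕ} (x : Fin n → ℝ) (m : ℕ) : ℝ :=
  ∑ i ∈ Finset.univ.filter (fun i : Fin n => (i : ℕ) < m), x i

lemma finite_setOf_card_eq_sum {n : ℕ} (x : Fin n → ℝ) (l : ℕ) :
    {r | ∃ s : Finset (Fin n), s.card = l ∧ r = ∑ i ∈ s, x i}.Finite := by
  refine (Set.finite_range fun s : Finset (Fin n) => ∑ i ∈ s, x i).subset ?_
  rintro r ⟨s, -, rfl⟩
  exact ⟨s, rfl⟩

lemma sum_le_eSum {n : ℕ} (x : Fin n → ℝ) {l : ℕ} {s : Finset (Fin n)} (hs : s.card = l) :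
    ∑ i ∈ s, x i ≤ eSum x l :=
  le_csSup (finite_setOf_card_eq_sum x l).bddAbove ⟨s, hs, rfl⟩

lemma exists_eSum_eq {n : ℕ} (x : Fin n → ℝ) {l : ℕ} (hl : l ≤ n) :
    ∃ s : Finset (Fin n), s.card = l ∧ eSum x l = ∑ i ∈ s, x i := by
  refine Set.Nonempty.csSup_mem ?_ (finite_setOf_card_eq_sum x l)
  obtain ⟨s, -, hs⟩ := Finset.exists_subset_card_eq (s := (Finset.univ : Finset (Fin n)))
    (n := l) (by simpa using hl)
  exact ⟨_, s, hs, rfl⟩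

lemma isOpen_lt_eSum {n l : ℕ} (hl : l ≤ n) (c : ℝ) :
    IsOpen {y : Fin n → ℝ | c < eSum y l} := by
  have h : {y : Fin n → ℝ | c < eSum y l} =
      ⋃ s : Finset (Fin n), ⋃ _ : s.card = l, {y | c < ∑ i ∈ s, y i} := by
    ext y
    simp only [Set.mem_ofPred_eq, Set.mem_iUnion, exists_prop]
    constructor
    · intro h
      obtain ⟨s, hs, he⟩ := exists_eSum_eq y hl
      exact ⟨s, hs, he ▸ h⟩
    · rintro ⟨s, hs, h⟩
      exact h.trans_le (sum_le_eSum y hs)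
  rw [h]
  exact isOpen_iUnion fun s => isOpen_iUnion fun _ =>
    isOpen_lt continuous_const (by fun_prop)

/-- A sum over a set of superlevel indices dominates any sum over as many indices. -/
lemma sum_le_sum_of_threshold {ι : Type*} [DecidableEq ι] {f : ι → ℝ} {s A : Finset ι} (c : ℝ)
    (hcard : s.card = A.card) (hA : ∀ i ∈ A, c ≤ f i) (hs : ∀ i ∉ A, f i ≤ c) :
    ∑ i ∈ s, f i ≤ ∑ i ∈ A, f i := by
  have h1 : ∑ i ∈ s, (f i - c) ≤ ∑ i ∈ s ∩ A, (f i - c) := by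
    rw [← Finset.sum_inter_add_sum_sdiff s A]
    have : ∑ i ∈ s \ A, (f i - c) ≤ 0 := Finset.sum_nonpos fun i hi =>
      sub_nonpos.2 (hs i (Finset.mem_sdiff.1 hi).2)
    linarith
  have h2 : ∑ i ∈ s ∩ A, (f i - c) ≤ ∑ i ∈ A, (f i - c) :=
    Finset.sum_le_sum_of_subset_of_nonneg Finset.inter_subset_right fun i hi _ =>
      sub_nonneg.2 (hA i hi)
  have h3 := h1.trans h2
  simp only [Finset.sum_sub_distrib, Finset.sum_const, hcard] at h3
  linarith

lemma card_filter_val_lt {n m : ℕ} (hm : m ≤ n) :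
    (Finset.univ.filter (fun i : Fin n => (i : ℕ) < m)).card = m := by
  rw [Fin.card_filter_val_lt, min_eq_right hm]

lemma sum_le_prefixSum {n : ℕ} {x : Fin n → ℝ} (hx : Antitone x) (s : Finset (Fin n)) :
    ∑ i ∈ s, x i ≤ prefixSum x s.card := by
  have hsn : s.card ≤ n := by simpa using s.card_le_univ
  rcases Nat.eq_zero_or_pos s.card with h0 | hpos
  · rw [Finset.card_eq_zero.1 h0]
    simp [prefixSum]
  · refine sum_le_sum_of_threshold (x ⟨s.card - 1, by omega⟩) (card_filter_val_lt hsn).symm ?_ ?_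
    · intro i hi
      have := (Finset.mem_filter.1 hi).2
      exact hx (Fin.le_def.2 (by simp only; omega))
    · intro i hi
      have : ¬ (i : ℕ) < s.card := by simpa using hi
      exact hx (Fin.le_def.2 (by simp only; omega))

lemma eSum_eq_prefixSum {n m : ℕ} {x : Fin n → ℝ} (hx : Antitone x) (hm : m ≤ n) :
    eSum x m = prefixSum x m := by
  refine le_antisymm ?_ (sum_le_eSum x (card_filter_val_lt hm))
  obtain ⟨s, hs, he⟩ := exists_eSum_eq x hm
  rw [he, ← hs]
  exact sum_le_prefixSum hx s

lemma prefixSum_zero {n : ℕ} (x : Fin n → ℝ) : prefixSum x 0 = 0 := by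
  simp [prefixSum]

lemma prefixSum_val {n m : ℕ} (f : ℕ → ℝ) (hm : m ≤ n) :
    prefixSum (fun i : Fin n => f i) m = ∑ i ∈ Finset.range m, f i := by
  rw [prefixSum, Finset.sum_filter, Fin.sum_univ_eq_sum_range (fun i => if i < m then f i else 0),
    ← Finset.sum_filter]
  congr 1
  ext i
  simp only [Finset.mem_filter, Finset.mem_range]
  omega

lemma sum_tensor {n k : ℕ} (x : Fin n → ℝ) (c : Fin k → ℝ) :
    ∑ i, tensor x c i = (∑ i, x i) * ∑ j, c j := by
  rw [Finset.sum_mul_sum, ← Fintype.sum_prod_type']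
  exact Equiv.sum_comp finProdFinEquiv.symm (fun p : Fin n × Fin k => x p.1 * c p.2)

lemma sum_prod_le_eSum_tensor {n k l : ℕ} (x : Fin n → ℝ) (c : Fin k → ℝ)
    {s : Finset (Fin n × Fin k)} (hs : s.card = l) :
    ∑ p ∈ s, x p.1 * c p.2 ≤ eSum (tensor x c) l := by
  have h := sum_le_eSum (tensor x c) (s := s.map finProdFinEquiv.toEmbedding) (l := l) (by simpa)
  simpa only [Finset.sum_map, Equiv.coe_toEmbedding, tensor, Equiv.symm_apply_apply] using h

lemma exists_eSum_tensor_eq {n k l : ℕ} (x : Fin n → ℝ) (c : Fin k → ℝ) (hl : l ≤ n * k) :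
    ∃ s : Finset (Fin n × Fin k), s.card = l ∧
      eSum (tensor x c) l = ∑ p ∈ s, x p.1 * c p.2 := by
  obtain ⟨s, hs, he⟩ := exists_eSum_eq (tensor x c) hl
  refine ⟨s.map finProdFinEquiv.symm.toEmbedding, by simpa, ?_⟩
  rw [he, Finset.sum_map]
  rfl

/-- The set of pairs `(i, j)` with `i < L j`. -/
def staircase (n : ℕ) {k : ℕ} (L : Fin k → ℕ) : Finset (Fin n × Fin k) :=
  Finset.univ.filter fun p => (p.1 : ℕ) < L p.2

lemma sum_staircase {n k : ℕ} (L : Fin k → ℕ) (x : Fin n → ℝ) (c : Fin k → ℝ) :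
    ∑ p ∈ staircase n L, x p.1 * c p.2 = ∑ j, c j * prefixSum x (L j) := by
  rw [staircase, Finset.sum_filter, Fintype.sum_prod_type_right]
  refine Finset.sum_congr rfl fun j _ => ?_
  rw [prefixSum, Finset.sum_filter, Finset.mul_sum]
  refine Finset.sum_congr rfl fun i _ => ?_
  split_ifs <;> ring

lemma card_staircase {n k : ℕ} {L : Fin k → ℕ} (hL : ∀ j, L j ≤ n) :
    (staircase n L).card = ∑ j, L j := by
  rw [staircase, Finset.card_filter, Fintype.sum_prod_type_right]
  refine Finset.sum_congr rfl fun j _ => ?_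
  rw [← Finset.card_filter, card_filter_val_lt (hL j)]

/-- An upper bound for `eSum (tensor x c) l` by the value on some staircase. -/
lemma exists_eSum_tensor_le {n k l : ℕ} {x : Fin n → ℝ} (hx : Antitone x) {c : Fin k → ℝ}
    (hc : ∀ j, 0 ≤ c j) (hl : l ≤ n * k) :
    ∃ L : Fin k → ℕ, (∀ j, L j ≤ n) ∧ ∑ j, L j = l ∧
      eSum (tensor x c) l ≤ ∑ j, c j * prefixSum x (L j) := by
  obtain ⟨s, hs, he⟩ := exists_eSum_tensor_eq x c hl
  let t : Fin k → Finset (Fin n) := fun j => Finset.univ.filter fun i => (i, j) ∈ s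
  have hs' : s = Finset.univ.filter fun p => p ∈ s := by simp
  refine ⟨fun j => (t j).card, fun j => by simpa using (t j).card_le_univ, ?_, ?_⟩
  · rw [← hs, hs', Finset.card_filter, Fintype.sum_prod_type_right]
    refine Finset.sum_congr rfl fun j _ => ?_
    simp [t]
  · rw [he, hs', Finset.sum_filter, Fintype.sum_prod_type_right]
    refine Finset.sum_le_sum fun j _ => ?_
    refine le_trans (le_of_eq ?_) (mul_le_mul_of_nonneg_left (sum_le_prefixSum hx (t j)) (hc j))
    rw [Finset.sum_filter, Finset.mul_sum]
    refine Finset.sum_congr rfl fun i _ => ?_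
    split_ifs <;> ring

lemma Sset_subset_Tcat {n k : ℕ} {y : Fin n → ℝ} (hy : Antitone y) {c : Fin k → ℝ}
    (hc : ∀ j, 0 ≤ c j) : Sset y ⊆ Tcat y c := by
  rintro x ⟨hx, hsum, hmaj⟩
  refine ⟨hx, by rw [sum_tensor, sum_tensor, hsum], fun l _ hl => ?_⟩
  obtain ⟨L, hLn, hLl, hle⟩ := exists_eSum_tensor_le hx.2.2 hc hl
  refine hle.trans (le_trans ?_
    (sum_prod_le_eSum_tensor y c (s := staircase n L) (by rw [card_staircase hLn, hLl])))
  rw [sum_staircase]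
  refine Finset.sum_le_sum fun j _ => mul_le_mul_of_nonneg_left ?_ (hc j)
  rcases Nat.eq_zero_or_pos (L j) with h0 | hpos
  · rw [h0, prefixSum_zero, prefixSum_zero]
  · rw [← eSum_eq_prefixSum hx.2.2 (hLn j), ← eSum_eq_prefixSum hy (hLn j)]
    exact hmaj _ hpos (hLn j)

lemma sum_lt_eSum_tensor_of_swap {n k l : ℕ} {y : Fin n → ℝ} {c : Fin k → ℝ}
    {s : Finset (Fin n × Fin k)} (hs : s.card = l) {p q : Fin n × Fin k} (hp : p ∈ s)
    (hq : q ∉ s) (hpq : y p.1 * c p.2 < y q.1 * c q.2) :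
    ∑ p ∈ s, y p.1 * c p.2 < eSum (tensor y c) l := by
  have hq' : q ∉ s.erase p := fun h => hq (Finset.mem_of_mem_erase h)
  have hcard : (insert q (s.erase p)).card = l := by
    rw [Finset.card_insert_of_notMem hq', Finset.card_erase_add_one hp, hs]
  refine lt_of_lt_of_le ?_ (sum_prod_le_eSum_tensor y c hcard)
  rw [Finset.sum_insert hq', ← Finset.add_sum_erase s _ hp]
  linarith

/-- If the prefix sums of `x` are strictly below those of `y` except at `0`, `2` and `n`, and the
components of `y` are suitably separated relative to `c`, then `x ⊗ c` is strictly majorized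
by `y ⊗ c`. -/
lemma eSum_tensor_lt {n k l : ℕ} (hn : 4 ≤ n) (hk : 0 < k) {x y : Fin n → ℝ} (hx : Antitone x)
    {c : Fin k → ℝ} (hc : ∀ j, 0 < c j)
    (hcc : c ⟨k - 1, by omega⟩ < c ⟨0, hk⟩)
    (hle : ∀ m ≤ n, prefixSum x m ≤ prefixSum y m)
    (hlt : ∀ m ≤ n, m ≠ 0 → m ≠ 2 → m ≠ n → prefixSum x m < prefixSum y m)
    (htop : ∀ i j, y ⟨1, by omega⟩ * c i < y ⟨0, by omega⟩ * c j)
    (hmid : y ⟨1, by omega⟩ = y ⟨2, by omega⟩) (hmid_pos : 0 < y ⟨2, by omega⟩)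
    (hbot : y ⟨n - 1, by omega⟩ = 0) (hl1 : 1 ≤ l) (hl : l < n * k) :
    eSum (tensor x c) l < eSum (tensor y c) l := by
  obtain ⟨L, hLn, hLl, hxle⟩ := exists_eSum_tensor_le hx (fun j => (hc j).le) hl.le
  have hcard : (staircase n L).card = l := by rw [card_staircase hLn, hLl]
  have hxy : ∀ j, c j * prefixSum x (L j) ≤ c j * prefixSum y (L j) := fun j =>
    mul_le_mul_of_nonneg_left (hle _ (hLn j)) (hc j).le
  by_cases hspecial : ∃ j, L j ≠ 0 ∧ L j ≠ 2 ∧ L j ≠ n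
  · obtain ⟨j, h0, h2, h3⟩ := hspecial
    refine hxle.trans_lt (lt_of_lt_of_le ?_ (sum_prod_le_eSum_tensor y c hcard))
    rw [sum_staircase]
    exact Finset.sum_lt_sum (fun j _ => hxy j) ⟨j, Finset.mem_univ j,
      mul_lt_mul_of_pos_left (hlt _ (hLn j) h0 h2 h3) (hc j)⟩
  · push Not at hspecial
    have hstair : ∑ j, c j * prefixSum x (L j) ≤ ∑ p ∈ staircase n L, y p.1 * c p.2 := by
      rw [sum_staircase]
      exact Finset.sum_le_sum fun j _ => hxy j
    refine (hxle.trans hstair).trans_lt ?_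
    by_cases hfull : ∃ j, L j = n
    · obtain ⟨j, hj⟩ := hfull
      obtain ⟨j', hj'⟩ : ∃ j', L j' ≠ n := by
        by_contra! hall
        simp only [hall, Finset.sum_const, Finset.card_univ, Fintype.card_fin,
          smul_eq_mul] at hLl
        rw [← hLl, mul_comm] at hl
        exact lt_irrefl _ hl
      have hj'2 : L j' ≤ 2 := by
        have := hspecial j'
        by_contra h
        exact hj' (this (by omega) (by omega))
      refine sum_lt_eSum_tensor_of_swap hcard (p := (⟨n - 1, by omega⟩, j))
        (q := (⟨2, by omega⟩, j')) ?_ ?_ ?_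
      · simp only [staircase, Finset.mem_filter, Finset.mem_univ, true_and]
        omega
      · simp only [staircase, Finset.mem_filter, Finset.mem_univ, true_and]
        omega
      · simp only [hbot, zero_mul]
        exact mul_pos hmid_pos (hc j')
    push Not at hfull
    have h02 : ∀ j, L j = 0 ∨ L j = 2 := fun j => by
      by_contra! h
      exact hfull j (hspecial j h.1 h.2)
    by_cases hzero : ∃ j, L j = 0
    · obtain ⟨j, hj⟩ := hzero
      obtain ⟨j', hj'⟩ : ∃ j', L j' ≠ 0 := by
        by_contra! hall
        simp only [hall, Finset.sum_const_zero] at hLl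
        omega
      have hj'2 := (h02 j').resolve_left hj'
      refine sum_lt_eSum_tensor_of_swap hcard (p := (⟨1, by omega⟩, j'))
        (q := (⟨0, by omega⟩, j)) ?_ ?_ (htop j' j)
      · simp only [staircase, Finset.mem_filter, Finset.mem_univ, true_and]
        omega
      · simp only [staircase, Finset.mem_filter, Finset.mem_univ, true_and]
        omega
    · push Not at hzero
      have h2 : ∀ j, L j = 2 := fun j => (h02 j).resolve_left (hzero j)
      refine sum_lt_eSum_tensor_of_swap hcard (p := (⟨1, by omega⟩, ⟨k - 1, by omega⟩))
        (q := (⟨2, by omega⟩, ⟨0, hk⟩)) ?_ ?_ ?_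
      · simp [staircase, h2]
      · simp [staircase, h2]
      · simp only [hmid]
        exact mul_lt_mul_of_pos_left hcc hmid_pos

/-- The sequence `(a - t, b, …, b, t)` with `m + 4` entries. -/
def targetSeq (m : ℕ) (a b t : ℝ) (i : ℕ) : ℝ :=
  if i = 0 then a - t else if i < m + 3 then b else t

/-- The sequence `(a - (m+1)η, b + (m+1)η, b - η, …, b - η, (m+1)η)` with `m + 4` entries. -/
def sourceSeq (m : ℕ) (a b η : ℝ) (i : ℕ) : ℝ :=
  if i = 0 then a - (m + 1) * η else if i = 1 then b + (m + 1) * η else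
    if i < m + 3 then b - η else (m + 1) * η

lemma sum_range_targetSeq (m : ℕ) (a b t : ℝ) {j : ℕ} (h1 : 1 ≤ j) (hj : j ≤ m + 3) :
    ∑ i ∈ Finset.range j, targetSeq m a b t i = a - t + (j - 1) * b := by
  induction j, h1 using Nat.le_induction with
  | base => simp [targetSeq]
  | succ j h1 ih =>
    rw [Finset.sum_range_succ, ih (by omega), targetSeq, if_neg (by omega), if_pos (by omega)]
    push_cast
    ring

lemma sum_range_sourceSeq (m : ℕ) (a b η : ℝ) {j : ℕ} (h2 : 2 ≤ j) (hj : j ≤ m + 3) :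
    ∑ i ∈ Finset.range j, sourceSeq m a b η i = a + b + (j - 2) * (b - η) := by
  induction j, h2 using Nat.le_induction with
  | base => simp [sourceSeq, Finset.sum_range_succ]
  | succ j h2 ih =>
    rw [Finset.sum_range_succ, ih (by omega), sourceSeq, if_neg (by omega), if_neg (by omega),
      if_pos (by omega)]
    push_cast
    ring

lemma sum_targetSeq (m : ℕ) (a b t : ℝ) :
    ∑ i ∈ Finset.range (m + 4), targetSeq m a b t i = a + (m + 2) * b := by
  rw [Finset.sum_range_succ, sum_range_targetSeq m a b t (by omega) le_rfl, targetSeq,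
    if_neg (by omega), if_neg (by omega)]
  push_cast
  ring

lemma sum_sourceSeq (m : ℕ) (a b η : ℝ) :
    ∑ i ∈ Finset.range (m + 4), sourceSeq m a b η i = a + (m + 2) * b := by
  rw [Finset.sum_range_succ, sum_range_sourceSeq m a b η (by omega) le_rfl, sourceSeq,
    if_neg (by omega), if_neg (by omega), if_neg (by omega)]
  push_cast
  ring

lemma targetSeq_mem_Vn {m : ℕ} {a b t : ℝ} (ht : 0 ≤ t) (htb : t ≤ b) (hab : b + t ≤ a)
    (hsum : a + (m + 2) * b = 1) : (fun i : Fin (m + 4) => targetSeq m a b t i) ∈ Vn (m + 4) := by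
  refine ⟨fun i => ?_, ?_, fun i j hij => ?_⟩
  · simp only [targetSeq]
    split_ifs <;> linarith
  · rw [Fin.sum_univ_eq_sum_range (targetSeq m a b t), sum_targetSeq, hsum]
  · have hij : (i : ℕ) ≤ j := hij
    simp only [targetSeq]
    split_ifs <;> first | linarith | omega

lemma sourceSeq_mem_Vn {m : ℕ} {a b η : ℝ} (hη : 0 < η) (hb : b = 4 * ((m + 1) * η))
    (hab : 2 * b ≤ a) (hsum : a + (m + 2) * b = 1) :
    (fun i : Fin (m + 4) => sourceSeq m a b η i) ∈ Vn (m + 4) := by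
  have hmη : η ≤ (m + 1) * η := by
    have : 0 ≤ (m : ℝ) * η := by positivity
    linarith
  refine ⟨fun i => ?_, ?_, fun i j hij => ?_⟩
  · simp only [sourceSeq]
    split_ifs <;> linarith
  · rw [Fin.sum_univ_eq_sum_range (sourceSeq m a b η), sum_sourceSeq, hsum]
  · have hij : (i : ℕ) ≤ j := hij
    simp only [sourceSeq]
    split_ifs <;> first | linarith | omega

lemma prefixSum_source_lt_target {m j : ℕ} {a b η : ℝ} (hη : 0 < η) (hj : j ≤ m + 4)
    (h0 : j ≠ 0) (h2 : j ≠ 2) (h4 : j ≠ m + 4) :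
    prefixSum (fun i : Fin (m + 4) => sourceSeq m a b η i) j <
      prefixSum (fun i : Fin (m + 4) => targetSeq m a b 0 i) j := by
  rw [prefixSum_val _ hj, prefixSum_val _ hj]
  rcases (show j = 1 ∨ 3 ≤ j by omega) with rfl | h3
  · have : 0 < ((m : ℝ) + 1) * η := by positivity
    simp [sourceSeq, targetSeq, this]
  · rw [sum_range_sourceSeq m a b η (by omega) (by omega),
      sum_range_targetSeq m a b 0 (by omega) (by omega)]
    have : (3 : ℝ) ≤ j := by exact_mod_cast h3
    nlinarith

lemma prefixSum_source_le_target {m j : ℕ} {a b η : ℝ} (hη : 0 < η) (hj : j ≤ m + 4) :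
    prefixSum (fun i : Fin (m + 4) => sourceSeq m a b η i) j ≤
      prefixSum (fun i : Fin (m + 4) => targetSeq m a b 0 i) j := by
  by_cases h0 : j = 0
  · simp [h0, prefixSum_zero]
  by_cases h2 : j = 2
  · rw [prefixSum_val _ hj, prefixSum_val _ hj, h2, sum_range_sourceSeq m a b η le_rfl (by omega),
      sum_range_targetSeq m a b 0 (by omega) (by omega)]
    push_cast
    linarith
  by_cases h4 : j = m + 4
  · rw [prefixSum_val _ hj, prefixSum_val _ hj, h4, sum_sourceSeq, sum_targetSeq]
  exact (prefixSum_source_lt_target hη hj h0 h2 h4).le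

/-- Theorem 5 of the paper. For any nonuniform probability
vector `z` and `n ≥ 4`, the set `A(z) = {y ∈ Vⁿ : S(y) ⊊ T(y,z)}` contains a
nonempty relatively open subset of `Vⁿ`; in particular it is uncountable. -/
theorem stmt4 {k n : ℕ} (hk : 0 < k) (hn : 4 ≤ n)
    (z : Fin k → ℝ) (hz : z ∈ Vn k) (hzpos : ∀ i, 0 < z i)
    (hnonunif : z ⟨0, hk⟩ > z ⟨k - 1, by omega⟩) :
    (∃ U : Set (Fin n → ℝ), IsOpen U ∧ (Vn n ∩ U).Nonempty ∧
      Vn n ∩ U ⊆ {y | Sset y ⊂ Tcat y z}) ∧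
    ¬ {y : Fin n → ℝ | y ∈ Vn n ∧ Sset y ⊂ Tcat y z}.Countable := by
  obtain ⟨m, rfl⟩ : ∃ m, n = m + 4 := ⟨n - 4, by omega⟩
  obtain ⟨r, hr0, hr⟩ : ∃ r : ℝ, 0 < r ∧ z ⟨0, hk⟩ = r * z ⟨k - 1, by omega⟩ :=
    ⟨z ⟨0, hk⟩ / z ⟨k - 1, by omega⟩, div_pos (hzpos _) (hzpos _),
      (div_mul_cancel₀ _ (hzpos _).ne').symm⟩
  obtain ⟨b, hb0, hb⟩ : ∃ b : ℝ, 0 < b ∧ (r + 2) * b + (m + 2) * b = 1 :=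
    ⟨1 / (r + 2 + (m + 2)), by positivity, by field_simp⟩
  obtain ⟨η, hη, hbη⟩ : ∃ η : ℝ, 0 < η ∧ b = 4 * ((m + 1) * η) :=
    ⟨b / (4 * (m + 1)), by positivity, by field_simp⟩
  set a := (r + 2) * b with ha
  have hrb : 0 < r * b := mul_pos hr0 hb0
  set x : Fin (m + 4) → ℝ := fun i => sourceSeq m a b η i with hx_def
  let y : ℝ → Fin (m + 4) → ℝ := fun t i => targetSeq m a b t i
  have hx : x ∈ Vn (m + 4) := sourceSeq_mem_Vn hη hbη (by linarith) hb
  have hxpre : prefixSum x 2 = a + b := by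
    rw [hx_def, prefixSum_val _ (by omega), sum_range_sourceSeq m a b η le_rfl (by omega)]
    push_cast
    ring
  have hy : ∀ t, 0 ≤ t → t ≤ b → y t ∈ Vn (m + 4) := fun t ht htb =>
    targetSeq_mem_Vn ht htb (by linarith) hb
  have hypre : ∀ t, prefixSum (y t) 2 = a + b - t := fun t => by
    rw [prefixSum_val _ (by omega), sum_range_targetSeq m a b t (by omega) (by omega)]
    push_cast
    ring
  have hycont : Continuous y := by
    refine continuous_pi fun i => ?_
    simp only [y, targetSeq]
    split_ifs <;> fun_prop
  have htop : ∀ i j, b * z i < a * z j := fun i j => by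
    have hi : z i ≤ z ⟨0, hk⟩ := hz.2.2 (Fin.le_def.2 (Nat.zero_le _))
    have hj : z ⟨k - 1, by omega⟩ ≤ z j := hz.2.2 (Fin.le_def.2 (by simp only; omega))
    calc b * z i ≤ b * (r * z j) := mul_le_mul_of_nonneg_left
          (hi.trans (hr ▸ mul_le_mul_of_nonneg_left hj hr0.le)) hb0.le
      _ < a * z j := by
        have := mul_pos hb0 (hzpos j)
        rw [ha]
        linarith
  let O : Set (Fin (m + 4) → ℝ) :=
    ⋂ l ∈ Finset.Ico 1 ((m + 4) * k), {y | eSum (tensor x z) l < eSum (tensor y z) l}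
  have hO : IsOpen O := by
    refine isOpen_biInter_finset fun l hl => ?_
    have htensor : Continuous fun y : Fin (m + 4) → ℝ => tensor y z := by
      unfold tensor
      fun_prop
    exact (isOpen_lt_eSum (Finset.mem_Ico.1 hl).2.le _).preimage htensor
  have hy0 : y 0 ∈ O := by
    refine Set.mem_iInter₂.2 fun l hl => ?_
    obtain ⟨hl1, hl2⟩ := Finset.mem_Ico.1 hl
    refine eSum_tensor_lt hn hk hx.2.2 hzpos hnonunif
      (fun j hj => prefixSum_source_le_target hη hj)
      (fun j hj h0 h2 h4 => prefixSum_source_lt_target hη hj h0 h2 h4) ?_ ?_ ?_ ?_ hl1 hl2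
    · intro i j
      simpa [y, targetSeq] using htop i j
    · simp [y, targetSeq]
    · simpa [y, targetSeq] using hb0
    · simp [y, targetSeq]
  let U : Set (Fin (m + 4) → ℝ) := O ∩ {y | prefixSum y 2 < a + b}
  have hU : IsOpen U := hO.inter (isOpen_lt (by unfold prefixSum; fun_prop) continuous_const)
  have hUsub : Vn (m + 4) ∩ U ⊆ {y | Sset y ⊂ Tcat y z} := by
    rintro w ⟨hw, hwO, hwpre⟩
    refine (Set.ssubset_iff_of_subset (Sset_subset_Tcat hw.2.2 hz.1)).2 ⟨x, ⟨hx, ?_, ?_⟩, ?_⟩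
    · rw [sum_tensor, sum_tensor, hx.2.1, hw.2.1]
    · intro l hl1 hl
      rcases hl.lt_or_eq with hlt | rfl
      · exact (Set.mem_iInter₂.1 hwO l (Finset.mem_Ico.2 ⟨hl1, hlt⟩)).le
      · have huniv : ∀ s : Finset (Fin ((m + 4) * k)), s.card = (m + 4) * k →
            s = Finset.univ := fun s hs => by
          rwa [← Finset.card_eq_iff_eq_univ, Fintype.card_fin]
        obtain ⟨s, hs, he⟩ := exists_eSum_eq (tensor x z) le_rfl
        obtain ⟨s', hs', he'⟩ := exists_eSum_eq (tensor w z) le_rfl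
        rw [he, he', huniv s hs, huniv s' hs', sum_tensor, sum_tensor, hx.2.1, hw.2.1]
    · rintro ⟨-, -, hmaj⟩
      have h := hmaj 2 (by omega) (by omega)
      rw [eSum_eq_prefixSum hx.2.2 (by omega), eSum_eq_prefixSum hw.2.2 (by omega), hxpre] at h
      exact absurd hwpre (not_lt.2 h)
  obtain ⟨δ, hδ, hball⟩ := Metric.isOpen_iff.1 (hO.preimage hycont) 0 hy0
  have hmem : ∀ t ∈ Set.Ioo 0 (min δ b), y t ∈ Vn (m + 4) ∩ U := by
    rintro t ⟨ht0, ht⟩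
    obtain ⟨htδ, htb⟩ := lt_min_iff.1 ht
    refine ⟨hy t ht0.le htb.le, hball ?_, ?_⟩
    · rw [Metric.mem_ball, Real.dist_eq, sub_zero, abs_of_pos ht0]
      exact htδ
    · change prefixSum (y t) 2 < a + b
      rw [hypre]
      linarith
  have hδb : 0 < min δ b := lt_min hδ hb0
  refine ⟨⟨U, hU, ?_, hUsub⟩, fun hcount => ?_⟩
  · exact ⟨y (min δ b / 2), hmem _ ⟨by linarith, by linarith⟩⟩
  · have hinj : Function.Injective y := fun t t' h => by
      have := congrArg (fun w => prefixSum w 2) h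
      simp only [hypre] at this
      linarith
    have hIoo : (Set.Ioo 0 (min δ b)).Countable :=
      Set.MapsTo.countable_of_injOn (f := y) (t := {w | w ∈ Vn (m + 4) ∧ Sset w ⊂ Tcat w z})
        (fun t ht => ⟨(hmem t ht).1, hUsub (hmem t ht)⟩) hinj.injOn hcount
    exact absurd hIoo.le_aleph0 (by
      rw [Cardinal.mk_Ioo_real hδb]
      exact not_le.2 Cardinal.aleph0_lt_continuum)

end
end
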